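/- arXiv:math/0403346 — 2 statements merged into one kernel-verified Lean document; each statement's English description precedes it below -/
import Mathlib

section
/- Let A be an associative algebra over a field k(q) and let T = (t_{ij}) be an n×n q-matrix in A, i.e. the entries satisfy: t_{ij}t_{ik} = q t_{ik}t_{ij} for j<k, t_{ik}t_{hk} = q t_{hk}t_{ik} for i<h, t_{il}t_{jk} = t_{jk}t_{il} for i<j, k<l, and t_{ik}t_{jl} - t_{jl}t_{ik} = (q - q^{-1}) t_{il}t_{jk} for i<j, k<l. Then the quantum determinant det_q(T) := ∑_{σ ∈ S_n} (-q)^{ℓ(σ)} t_{1,σ(1)} t_{2,σ(2)} ⋯ t_{n,σ(n)} commutes with every entry t_{ij} of T. -/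
/-!
Write `ξ b a` for the quantum minor obtained by deleting row `b` and column `a`. The quantum
adjugate, with entries `(-q)^(a - b) ξ b a`, is both a right and a left inverse of `t` up to the
factor `det_q t` (`IsQMat.laplace_row`, `IsQMat.laplace_col`). Bracketing `t · adj t · t` in the two
possible ways then gives `det_q(t) t = t det_q(t)`.

The row Laplace relation follows from the `q`-alternating behaviour of `det_q` in the rows: permuting
the rows by `τ` multiplies it by `(-q)^ℓ(τ)` (`IsQMat.qDet_perm`), and a repeated row makes it vanish
(`IsQMat.qDet_eq_zero`). Both reduce to adjacent transpositions, where pairing `σ` with `σ s_p`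
reduces the claim to an identity between `2 × 2` quantum minors (`qDet_adj`).

The column relation is the row relation for the transposed matrix, which is again a q-matrix, once
`det_q(tᵀ) = det_q(t)` is known (`IsQMat.qDet_transpose`). For this, expand
`∑_τ (-q)^ℓ(τ) det_q(t ∘ τ)` as the double sum
`∑_{τ,σ} (-q)^(ℓ(τ)+ℓ(σ)) ∏_p t_{τ(p),σ(p)}`, which is symmetric under transposition; it equals
`(∑_τ q^(2ℓ(τ))) det_q(t)`, and the scalar factor is a polynomial in `q` with value `n!` at `q = 1`,
hence nonzero.
-/

/-- The number of inversions (the length) of a permutation of `Fin n`. -/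
def permLength {n : ℕ} (σ : Equiv.Perm (Fin n)) : ℕ :=
  ((Finset.univ : Finset (Fin n × Fin n)).filter
    (fun p => p.1 < p.2 ∧ σ p.2 < σ p.1)).card

/-- The quantum determinant `∑_σ (-q)^{ℓ(σ)} t_{0,σ(0)} ⋯ t_{n-1,σ(n-1)}` of a
matrix `t` with entries in a `k(q)`-algebra. -/
noncomputable def qDet {k : Type*} [Field k] {A : Type*} [Ring A] [Algebra (RatFunc k) A]
    (q : RatFunc k) {n : ℕ} (t : Fin n → Fin n → A) : A :=
  ∑ σ : Equiv.Perm (Fin n),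
    ((-q) ^ permLength σ) • (((List.finRange n).map (fun i => t i (σ i))).prod)

/-! ### Adjacent transpositions -/

theorem permLength_swap {n : ℕ} (σ : Equiv.Perm (Fin (n + 1))) (p : Fin n)
    (h : σ p.castSucc < σ p.succ) :
    permLength (σ * Equiv.swap p.castSucc p.succ) = permLength σ + 1 := by
  classical
  -- The transposition `s` maps inversions `(a, b)` of `σ` to inversions `(s a, s b)` of `σ * s`;
  -- the only further inversion of `σ * s` is the swapped pair itself.
  have key : ((Finset.univ : Finset (Fin (n+1) × Fin (n+1))).filter
      (fun x => x.1 < x.2 ∧ (σ * Equiv.swap p.castSucc p.succ) x.2 < (σ * Equiv.swap p.castSucc p.succ) x.1))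
      = insert (p.castSucc, p.succ) (((Finset.univ : Finset (Fin (n+1) × Fin (n+1))).filter
        (fun x => x.1 < x.2 ∧ σ x.2 < σ x.1)).map
        ((Equiv.swap p.castSucc p.succ).prodCongr (Equiv.swap p.castSucc p.succ)).toEmbedding) := by
    ext ⟨a, b⟩
    simp only [Finset.mem_filter, Finset.mem_univ, true_and, Finset.mem_insert,
      Finset.mem_map_equiv, Equiv.prodCongr_symm, Equiv.symm_swap, Equiv.prodCongr_apply, Prod.map,
      Equiv.Perm.mul_apply, Prod.mk.injEq]
    -- Only the values of `p.castSucc` and `p.succ` matter from here on.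
    have hp : (p.castSucc : Fin (n+1)).val = p.val := rfl
    have hs : (p.succ : Fin (n+1)).val = p.val + 1 := rfl
    generalize p.castSucc = x at *
    generalize p.succ = y at *
    have hab : a = b → ¬ σ b < σ a := fun e => by rw [e]; exact lt_irrefl _
    simp only [Equiv.swap_apply_def]
    grind
  unfold permLength
  rw [key, Finset.card_insert_of_notMem, Finset.card_map]
  simp only [Finset.mem_map_equiv, Equiv.prodCongr_symm, Equiv.symm_swap, Equiv.prodCongr_apply,
    Prod.map, Equiv.swap_apply_left, Equiv.swap_apply_right, Finset.mem_filter]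
  exact fun h' => lt_asymm h'.2.1 Fin.castSucc_lt_succ

theorem prod_split {A : Type*} [Monoid A] {n : ℕ} (p : Fin n) (f : Fin (n + 1) → A) :
    ((List.finRange (n + 1)).map f).prod =
      (((List.finRange (n + 1)).map f).take p).prod * (f p.castSucc * f p.succ) *
        (((List.finRange (n + 1)).map f).drop (p + 2)).prod := by
  conv_lhs => rw [← List.prod_take_mul_prod_drop _ (p : ℕ)]
  rw [List.drop_eq_getElem_cons (by simp), List.drop_eq_getElem_cons (by simp)]
  simp [mul_assoc]
  rfl

theorem prod_take_congr {A : Type*} [Monoid A] {n : ℕ} (p : Fin n) {f g : Fin (n + 1) → A}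
    (h : ∀ i, i ≠ p.castSucc → i ≠ p.succ → f i = g i) :
    (((List.finRange (n + 1)).map f).take p).prod =
      (((List.finRange (n + 1)).map g).take p).prod := by
  congr 1
  refine List.ext_getElem (by simp) fun i h1 h2 => ?_
  have : i < p := by simp at h1; omega
  simp only [List.getElem_take, List.getElem_map, List.getElem_finRange]
  apply h <;> simp [Fin.ext_iff] <;> omega

theorem prod_drop_congr {A : Type*} [Monoid A] {n : ℕ} (p : Fin n) {f g : Fin (n + 1) → A}
    (h : ∀ i, i ≠ p.castSucc → i ≠ p.succ → f i = g i) :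
    (((List.finRange (n + 1)).map f).drop (p + 2)).prod =
      (((List.finRange (n + 1)).map g).drop (p + 2)).prod := by
  congr 1
  refine List.ext_getElem (by simp) fun i h1 h2 => ?_
  simp only [List.getElem_drop, List.getElem_map, List.getElem_finRange]
  apply h <;> simp [Fin.ext_iff] <;> omega

theorem sum_pair {A : Type*} [AddCommMonoid A] {n : ℕ} (p : Fin n)
    (F : Equiv.Perm (Fin (n + 1)) → A) :
    ∑ σ, F σ = ∑ σ : Equiv.Perm (Fin (n + 1)) with σ p.castSucc < σ p.succ,
      (F σ + F (σ * Equiv.swap p.castSucc p.succ)) := by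
  rw [Finset.sum_add_distrib,
    ← Finset.sum_filter_add_sum_filter_not _ (fun σ : Equiv.Perm (Fin (n + 1)) =>
      σ p.castSucc < σ p.succ)]
  congr 1
  symm
  refine Finset.sum_bij (fun σ _ => σ * Equiv.swap p.castSucc p.succ) ?_ ?_ ?_ ?_
  · intro σ hσ
    simp at hσ ⊢
    exact hσ.le
  · intro a _ b _ h
    exact mul_right_cancel h
  · intro σ hσ
    refine ⟨σ * Equiv.swap p.castSucc p.succ, ?_, by simp [mul_assoc]⟩
    simp at hσ ⊢
    exact lt_of_le_of_ne hσ fun h => (Fin.castSucc_lt_succ (i := p)).ne' (σ.injective h)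
  · intro _ _; rfl

theorem permLength_one (n : ℕ) : permLength (1 : Equiv.Perm (Fin n)) = 0 := by
  rw [permLength, Finset.card_eq_zero, Finset.filter_eq_empty_iff]
  exact fun x _ h => lt_asymm h.1 h.2

/-! ### Row alternation -/

section
variable {k : Type*} [Field k] {A : Type*} [Ring A] [Algebra (RatFunc k) A] (q : RatFunc k)

/-- Grouping `σ` with `σ s_p` writes the quantum determinant through `2 × 2` quantum minors of the
adjacent rows `p` and `p + 1`. -/
theorem qDet_pair {n : ℕ} (p : Fin n) (u : Fin (n + 1) → Fin (n + 1) → A) :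
    qDet q u = ∑ σ : Equiv.Perm (Fin (n + 1)) with σ p.castSucc < σ p.succ,
      (-q) ^ permLength σ •
        ((((List.finRange (n + 1)).map fun i => u i (σ i)).take p).prod *
          (u p.castSucc (σ p.castSucc) * u p.succ (σ p.succ) -
            q • (u p.castSucc (σ p.succ) * u p.succ (σ p.castSucc))) *
          (((List.finRange (n + 1)).map fun i => u i (σ i)).drop (p + 2)).prod) := by
  rw [qDet, sum_pair p]
  refine Finset.sum_congr rfl fun σ hσ => ?_
  rw [permLength_swap σ p (by simpa using hσ), prod_split p, prod_split p,
    prod_take_congr p (f := fun i => u i ((σ * Equiv.swap p.castSucc p.succ) i))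
      (g := fun i => u i (σ i)),
    prod_drop_congr p (f := fun i => u i ((σ * Equiv.swap p.castSucc p.succ) i))
      (g := fun i => u i (σ i))]
  · simp only [Equiv.Perm.mul_apply, Equiv.swap_apply_left, Equiv.swap_apply_right, pow_succ,
      mul_sub, sub_mul, smul_sub, mul_smul_comm, smul_mul_assoc, smul_smul]
    simp [sub_eq_add_neg]
  all_goals
    intro i h1 h2
    simp [Equiv.swap_apply_of_ne_of_ne h1 h2]

/-- Two matrices differing only in two adjacent rows, whose `2 × 2` quantum minors in these rows
differ by the factor `c`, have quantum determinants differing by the factor `c`. -/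
theorem qDet_adj {n : ℕ} (p : Fin n) (u v : Fin (n + 1) → Fin (n + 1) → A) (c : RatFunc k)
    (hne : ∀ i, i ≠ p.castSucc → i ≠ p.succ → u i = v i)
    (h : ∀ a b, a < b → u p.castSucc a * u p.succ b - q • (u p.castSucc b * u p.succ a) =
      c • (v p.castSucc a * v p.succ b - q • (v p.castSucc b * v p.succ a))) :
    qDet q u = c • qDet q v := by
  rw [qDet_pair q p, qDet_pair q p, Finset.smul_sum]
  refine Finset.sum_congr rfl fun σ hσ => ?_
  have hh : ∀ i, i ≠ p.castSucc → i ≠ p.succ → u i (σ i) = v i (σ i) := fun i h1 h2 => by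
    rw [hne i h1 h2]
  rw [h _ _ (by simpa using hσ), prod_take_congr p hh, prod_drop_congr p hh, mul_smul_comm,
    smul_mul_assoc, smul_comm]

/-- The defining relations of a square q-matrix. -/
structure IsQMat {n : ℕ} (t : Fin n → Fin n → A) : Prop where
  row : ∀ i j l : Fin n, j < l → t i j * t i l = q • (t i l * t i j)
  col : ∀ i h l : Fin n, i < h → t i l * t h l = q • (t h l * t i l)
  cross : ∀ i j l m : Fin n, i < j → l < m → t i m * t j l = t j l * t i m
  mix : ∀ i j l m : Fin n, i < j → l < m →
      t i l * t j m - t j m * t i l = (q - q⁻¹) • (t i m * t j l)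

variable {q}

theorem IsQMat.transpose {n : ℕ} {t : Fin n → Fin n → A} (ht : IsQMat q t) :
    IsQMat q (fun i j => t j i) where
  row i j l h := ht.col j l i h
  col i h l hh := ht.row l i h hh
  cross i j l m h1 h2 := (ht.cross l m i j h2 h1).symm
  mix i j l m h1 h2 := by rw [ht.mix l m i j h2 h1, ht.cross l m i j h2 h1]

theorem IsQMat.minor {n m : ℕ} {t : Fin n → Fin n → A} (ht : IsQMat q t) {f g : Fin m → Fin n}
    (hf : StrictMono f) (hg : StrictMono g) : IsQMat q (fun i j => t (f i) (g j)) where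
  row i j l h := ht.row _ _ _ (hg h)
  col i h l hh := ht.col _ _ _ (hf hh)
  cross i j l m h1 h2 := ht.cross _ _ _ _ (hf h1) (hg h2)
  mix i j l m h1 h2 := ht.mix _ _ _ _ (hf h1) (hg h2)

theorem IsQMat.qDet_eq_zero_adj {n : ℕ} {t : Fin (n + 1) → Fin (n + 1) → A} (ht : IsQMat q t)
    (r : Fin (n + 1) → Fin (n + 1)) (p : Fin n) (h : r p.castSucc = r p.succ) :
    qDet q (fun i => t (r i)) = 0 := by
  rw [qDet_adj q p (fun i => t (r i)) (fun i => t (r i)) 0 (fun _ _ _ => rfl), zero_smul]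
  intro a b hab
  rw [h, ht.row _ _ _ hab, sub_self, zero_smul]

/-- Here `r` may repeat rows elsewhere, so that the lemma also serves the vanishing result. -/
theorem IsQMat.qDet_swap_adj {n : ℕ} {t : Fin (n + 1) → Fin (n + 1) → A} (ht : IsQMat q t)
    (hq : q ≠ 0) (r : Fin (n + 1) → Fin (n + 1)) (p : Fin n) (h : r p.castSucc < r p.succ) :
    qDet q (fun i => t (r (Equiv.swap p.castSucc p.succ i))) =
      (-q) • qDet q (fun i => t (r i)) := by
  apply qDet_adj q p
  · intro i h1 h2
    rw [Equiv.swap_apply_of_ne_of_ne h1 h2]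
  · intro a b hab
    simp only [Equiv.swap_apply_left, Equiv.swap_apply_right]
    have h1 := ht.mix _ _ _ _ h hab
    have h2 := ht.cross _ _ _ _ h hab
    rw [sub_eq_iff_eq_add] at h1
    rw [h1, ← h2]
    simp only [smul_sub, smul_add, smul_smul]
    have : -q * (q - q⁻¹) = 1 - q * q := by field_simp; ring
    rw [this]
    simp only [sub_smul, neg_smul, one_smul, neg_mul]
    abel

theorem IsQMat.qDet_perm {n : ℕ} {t : Fin (n + 1) → Fin (n + 1) → A} (ht : IsQMat q t)
    (hq : q ≠ 0) (τ : Equiv.Perm (Fin (n + 1))) :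
    qDet q (fun i => t (τ i)) = (-q) ^ permLength τ • qDet q t := by
  have hτ : τ ∈ Submonoid.closure
      (Set.range fun i : Fin n ↦ Equiv.swap i.castSucc i.succ) := by
    rw [Equiv.Perm.mclosure_swap_castSucc_succ]; trivial
  induction hτ using Submonoid.closure_induction_right with
  | one =>
    simp [permLength_one]
  | mul_right x hx y hy ih =>
    obtain ⟨p, rfl⟩ := hy
    rcases lt_trichotomy (x p.castSucc) (x p.succ) with h | h | h
    · rw [permLength_swap x p h, pow_succ', mul_smul, ← ih]
      exact ht.qDet_swap_adj hq x p h
    · exact absurd (x.injective h) Fin.castSucc_lt_succ.ne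
    · have h' : (x * Equiv.swap p.castSucc p.succ) p.castSucc <
          (x * Equiv.swap p.castSucc p.succ) p.succ := by simpa using h
      have h1 := ht.qDet_swap_adj hq _ p h'
      have h2 := permLength_swap _ p h'
      simp only [mul_assoc, Equiv.swap_mul_self, mul_one] at h2
      simp only [Equiv.Perm.mul_apply, Equiv.swap_apply_self] at h1
      rw [ih, h2, pow_succ', mul_smul] at h1
      exact (smul_right_injective A (neg_ne_zero.2 hq) h1).symm

theorem IsQMat.qDet_eq_zero {n : ℕ} {t : Fin (n + 1) → Fin (n + 1) → A} (ht : IsQMat q t)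
    (hq : q ≠ 0) (r : Fin (n + 1) → Fin (n + 1)) (hr : ¬ Function.Injective r) :
    qDet q (fun i => t (r i)) = 0 := by
  -- Rearranging rows never changes whether the determinant vanishes, so two equal rows may be
  -- moved to the top.
  have key (π : Equiv.Perm (Fin (n + 1))) :
      qDet q (fun i => t (r (π i))) = 0 ↔ qDet q (fun i => t (r i)) = 0 := by
    have hπ : π ∈ Submonoid.closure
        (Set.range fun i : Fin n ↦ Equiv.swap i.castSucc i.succ) := by
      rw [Equiv.Perm.mclosure_swap_castSucc_succ]; trivial
    induction hπ using Submonoid.closure_induction_right with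
    | one => simp
    | mul_right x hx y hy ih =>
      obtain ⟨p, rfl⟩ := hy
      refine Iff.trans ?_ ih
      simp only [Equiv.Perm.mul_apply]
      rcases lt_trichotomy (r (x p.castSucc)) (r (x p.succ)) with h | h | h
      · rw [ht.qDet_swap_adj hq (fun i => r (x i)) p h]
        simp [hq]
      · rw [ht.qDet_eq_zero_adj (fun i => r (x i)) p h,
          ht.qDet_eq_zero_adj (fun i => r (x (Equiv.swap p.castSucc p.succ i))) p (by simp [h])]
      · have h1 := ht.qDet_swap_adj hq (fun i => r (x (Equiv.swap p.castSucc p.succ i))) p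
          (by simpa using h)
        simp only [Equiv.swap_apply_self] at h1
        rw [h1]
        simp [hq]
  obtain ⟨a, b, hab, hne⟩ : ∃ a b, r a = r b ∧ a ≠ b := by
    simpa [Function.Injective] using hr
  cases n with
  | zero => exact absurd (Subsingleton.elim (α := Fin 1) a b) hne
  | succ n =>
    obtain ⟨π, h0, h1⟩ : ∃ π : Equiv.Perm (Fin (n + 2)), π 0 = a ∧ π 1 = b := by
      refine ⟨Equiv.swap (Equiv.swap 0 a 1) b * Equiv.swap 0 a, ?_, ?_⟩
      · simp only [Equiv.Perm.mul_apply, Equiv.swap_apply_left]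
        refine Equiv.swap_apply_of_ne_of_ne ?_ hne
        intro h
        have := (Equiv.swap 0 a).injective ((Equiv.swap_apply_left 0 a).trans h)
        simp at this
      · simp
    rw [← key π]
    exact ht.qDet_eq_zero_adj (fun i => r (π i)) 0 (by simpa [h0, h1] using hab)

/-! ### Transposition invariance -/

/-- Characteristic zero and `q` being the indeterminate are used to cancel `∑_τ q^(2ℓ(τ))`. -/
theorem IsQMat.qDet_transpose [CharZero k] {n : ℕ} {t : Fin n → Fin n → A} (ht : IsQMat q t)
    (hq : q = RatFunc.X) : qDet q (fun i j => t j i) = qDet q t := by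
  cases n with
  | zero => simp [qDet]
  | succ n =>
  have hq0 : q ≠ 0 := hq ▸ RatFunc.X_ne_zero
  set c : RatFunc k := ∑ τ : Equiv.Perm (Fin (n + 1)), (-q) ^ permLength τ * (-q) ^ permLength τ
    with hc
  have hc0 : c ≠ 0 := by
    have : c = algebraMap (Polynomial k) (RatFunc k)
        (∑ τ : Equiv.Perm (Fin (n + 1)), Polynomial.X ^ (2 * permLength τ)) := by
      rw [hc, map_sum]
      refine Finset.sum_congr rfl fun τ _ => ?_
      rw [← mul_pow, neg_mul_neg, map_pow, RatFunc.algebraMap_X, hq, pow_mul, sq]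
    rw [this]
    refine RatFunc.algebraMap_ne_zero fun h => ?_
    have h1 := congrArg (Polynomial.eval 1) h
    simp [Polynomial.eval_finsetSum, Fintype.card_perm, Nat.factorial_ne_zero] at h1
  have hsum {u : Fin (n + 1) → Fin (n + 1) → A} (hu : IsQMat q u) :
      c • qDet q u = ∑ τ : Equiv.Perm (Fin (n + 1)), ∑ σ : Equiv.Perm (Fin (n + 1)),
        ((-q) ^ permLength τ * (-q) ^ permLength σ) •
          ((List.finRange (n + 1)).map fun i => u (τ i) (σ i)).prod := by
    rw [hc, Finset.sum_smul]
    refine Finset.sum_congr rfl fun τ _ => ?_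
    rw [mul_smul, ← hu.qDet_perm hq0 τ, qDet, Finset.smul_sum]
    simp only [mul_smul]
  refine smul_right_injective A hc0 ?_
  simp only []
  rw [hsum ht, hsum ht.transpose, Finset.sum_comm]
  simp only [mul_comm]

/-! ### Laplace expansion -/

/-- The permutation of `Fin (m + 1)` sending `p` to `j` and acting as `σ` between the complements of
`p` and of `j`, both identified with `Fin m` in increasing order. -/
noncomputable def permIns {m : ℕ} (p j : Fin (m + 1)) (σ : Equiv.Perm (Fin m)) :
    Equiv.Perm (Fin (m + 1)) :=
  ((finSuccEquiv' p).trans (Equiv.optionCongr σ)).trans (finSuccEquiv' j).symm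

@[simp] theorem permIns_self {m : ℕ} (p j : Fin (m + 1)) (σ : Equiv.Perm (Fin m)) :
    permIns p j σ p = j := by simp [permIns]

@[simp] theorem permIns_succAbove {m : ℕ} (p j : Fin (m + 1)) (σ : Equiv.Perm (Fin m))
    (x : Fin m) : permIns p j σ (p.succAbove x) = j.succAbove (σ x) := by simp [permIns]

@[simp] theorem permIns_succ {m : ℕ} (j : Fin (m + 1)) (σ : Equiv.Perm (Fin m))
    (x : Fin m) : permIns 0 j σ x.succ = j.succAbove (σ x) := by
  simpa using permIns_succAbove 0 j σ x

@[simp] theorem permIns_castSucc {m : ℕ} (j : Fin (m + 1)) (σ : Equiv.Perm (Fin m))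
    (x : Fin m) : permIns (Fin.last m) j σ x.castSucc = j.succAbove (σ x) := by
  simpa using permIns_succAbove (Fin.last m) j σ x

theorem permIns_bijective {m : ℕ} (p : Fin (m + 1)) :
    Function.Bijective fun x : Fin (m + 1) × Equiv.Perm (Fin m) => permIns p x.1 x.2 := by
  rw [Fintype.bijective_iff_injective_and_card]
  constructor
  · rintro ⟨j, σ⟩ ⟨j', σ'⟩ h
    simp only at h
    have h1 : j = j' := by simpa using DFunLike.congr_fun h p
    subst h1
    refine Prod.ext rfl (Equiv.ext fun x => ?_)
    simpa using DFunLike.congr_fun h (p.succAbove x)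
  · simp [Fintype.card_perm, Nat.factorial_succ]

theorem sum_permIns {m : ℕ} (p : Fin (m + 1)) {B : Type*} [AddCommMonoid B]
    (F : Equiv.Perm (Fin (m + 1)) → B) :
    ∑ σ, F σ = ∑ j, ∑ σ, F (permIns p j σ) := by
  rw [← Fintype.sum_prod_type', ← (Equiv.ofBijective _ (permIns_bijective p)).sum_comp]
  rfl

theorem permLength_eq_sum {n : ℕ} (σ : Equiv.Perm (Fin n)) :
    permLength σ = ∑ i, ∑ j, if i < j ∧ σ j < σ i then 1 else 0 := by
  rw [permLength, Finset.card_filter, ← Fintype.sum_prod_type']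

theorem permLength_permIns_zero {m : ℕ} (j : Fin (m + 1)) (σ : Equiv.Perm (Fin m)) :
    permLength (permIns 0 j σ) = j + permLength σ := by
  -- The inversions involving position `0` are counted by the `j` values below `j`.
  have h : ∑ x, (if j.succAbove (σ x) < j then 1 else 0) = (j : ℕ) := by
    rw [Equiv.sum_comp σ (fun x => if j.succAbove x < j then 1 else 0)]
    simp only [Fin.succAbove_lt_iff_castSucc_lt]
    simp only [Fin.lt_def, Fin.val_castSucc]
    rw [Fin.sum_univ_eq_sum_range (fun x => if x < (j : ℕ) then 1 else 0), ← Finset.card_filter]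
    have : Finset.filter (fun x => x < (j : ℕ)) (Finset.range m) = Finset.range j := by
      ext x; simp; omega
    rw [this, Finset.card_range]
  rw [permLength_eq_sum, permLength_eq_sum, Fin.sum_univ_succ]
  simp [-Finset.sum_boole, Fin.sum_univ_succ, h, Fin.succAbove_lt_succAbove_iff]

theorem permLength_permIns_last {m : ℕ} (j : Fin (m + 1)) (σ : Equiv.Perm (Fin m)) :
    permLength (permIns (Fin.last m) j σ) = (m - j) + permLength σ := by
  -- The inversions involving the last position are counted by the `m - j` values above `j`.
  have h : ∑ x, (if j < j.succAbove (σ x) then 1 else 0) = m - (j : ℕ) := by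
    rw [Equiv.sum_comp σ (fun x => if j < j.succAbove x then 1 else 0)]
    simp only [Fin.lt_succAbove_iff_le_castSucc]
    simp only [Fin.le_def, Fin.val_castSucc]
    rw [Fin.sum_univ_eq_sum_range (fun x => if (j : ℕ) ≤ x then 1 else 0), ← Finset.card_filter]
    have : Finset.filter (fun x => (j : ℕ) ≤ x) (Finset.range m) = Finset.Ico (j : ℕ) m := by
      ext x; simp; omega
    rw [this, Nat.card_Ico]
  rw [permLength_eq_sum, permLength_eq_sum, Fin.sum_univ_castSucc]
  simp [-Finset.sum_boole, Fin.sum_univ_castSucc, Fin.succAbove_lt_succAbove_iff, Finset.sum_add_distrib, h,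
    Fin.castSucc_lt_last, add_comm, not_lt.2 (Fin.le_last _)]

theorem qDet_expand_zero {m : ℕ} (u : Fin (m + 1) → Fin (m + 1) → A) :
    qDet q u = ∑ j : Fin (m + 1), (-q) ^ (j : ℕ) •
      (u 0 j * qDet q (fun a b => u a.succ (j.succAbove b))) := by
  rw [qDet, sum_permIns 0]
  refine Finset.sum_congr rfl fun j _ => ?_
  rw [qDet, Finset.mul_sum, Finset.smul_sum]
  refine Finset.sum_congr rfl fun σ _ => ?_
  rw [permLength_permIns_zero, pow_add, mul_smul, List.finRange_succ]
  simp [Function.comp_def]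

theorem qDet_expand_last {m : ℕ} (u : Fin (m + 1) → Fin (m + 1) → A) :
    qDet q u = ∑ j : Fin (m + 1), (-q) ^ (m - j : ℕ) •
      (qDet q (fun a b => u a.castSucc (j.succAbove b)) * u (Fin.last m) j) := by
  rw [qDet, sum_permIns (Fin.last m)]
  refine Finset.sum_congr rfl fun j _ => ?_
  rw [qDet, Finset.sum_mul, Finset.smul_sum]
  refine Finset.sum_congr rfl fun σ _ => ?_
  rw [permLength_permIns_last, pow_add, mul_smul, List.finRange_succ_last]
  simp [Function.comp_def]

/-- The quantum determinant of the rows of `t` other than `j`, in order, with row `i` inserted at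
position `p`. -/
theorem IsQMat.qDet_insertNth {m : ℕ} {t : Fin (m + 1) → Fin (m + 1) → A} (ht : IsQMat q t)
    (hq : q ≠ 0) (p i j : Fin (m + 1)) :
    qDet q (fun a => t (p.insertNth (α := fun _ => Fin (m + 1)) i j.succAbove a)) =
      if i = j then (-q) ^ permLength (permIns p j 1) • qDet q t else 0 := by
  split_ifs with h
  · subst h
    rw [← ht.qDet_perm hq]
    congr 1
    funext a
    congr 1
    induction a using Fin.succAboveCases p <;> simp
  · obtain ⟨x, rfl⟩ := Fin.exists_succAbove_eq h
    refine ht.qDet_eq_zero hq _ fun hinj => ?_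
    have : p = p.succAbove x := hinj (by simp)
    exact Fin.succAbove_ne p x this.symm

theorem IsQMat.laplace_row {m : ℕ} {t : Fin (m + 1) → Fin (m + 1) → A} (ht : IsQMat q t)
    (hq : q ≠ 0) (i j : Fin (m + 1)) :
    ∑ l : Fin (m + 1), (-q) ^ (l : ℕ) •
      (t i l * qDet q (fun a b => t (j.succAbove a) (l.succAbove b))) =
      if i = j then (-q) ^ (j : ℕ) • qDet q t else 0 := by
  have h := ht.qDet_insertNth hq 0 i j
  rw [permLength_permIns_zero, permLength_one, add_zero, qDet_expand_zero] at h
  simpa using h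

theorem IsQMat.laplace_col [CharZero k] {m : ℕ} {t : Fin (m + 1) → Fin (m + 1) → A}
    (ht : IsQMat q t) (hq : q = RatFunc.X) (i j : Fin (m + 1)) :
    ∑ l : Fin (m + 1), (-q) ^ (m - l : ℕ) •
      (qDet q (fun a b => t (l.succAbove a) (j.succAbove b)) * t l i) =
      if i = j then (-q) ^ (m - j : ℕ) • qDet q t else 0 := by
  have h := ht.transpose.qDet_insertNth (hq ▸ RatFunc.X_ne_zero) (Fin.last m) i j
  rw [permLength_permIns_last, permLength_one, add_zero, qDet_expand_last,
    ht.qDet_transpose hq] at h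
  rw [← h]
  refine Finset.sum_congr rfl fun l _ => ?_
  rw [← (ht.minor (Fin.strictMono_succAbove l) (Fin.strictMono_succAbove j)).qDet_transpose hq]
  simp

end

/-! ### Commutation -/

/-- the quantum determinant of a q-matrix commutes with every entry. -/
theorem qDet_commutes {k : Type*} [Field k] [CharZero k]
    {A : Type*} [Ring A] [Algebra (RatFunc k) A] {n : ℕ}
    (q : RatFunc k) (hq : q = RatFunc.X) (t : Fin n → Fin n → A)
    (hrow : ∀ i j l : Fin n, j < l → t i j * t i l = q • (t i l * t i j))
    (hcol : ∀ i h l : Fin n, i < h → t i l * t h l = q • (t h l * t i l))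
    (hcross : ∀ i j l m : Fin n, i < j → l < m → t i m * t j l = t j l * t i m)
    (hmix : ∀ i j l m : Fin n, i < j → l < m →
      t i l * t j m - t j m * t i l = (q - q⁻¹) • (t i m * t j l)) :
    ∀ i j : Fin n, qDet q t * t i j = t i j * qDet q t := by
  intro i j
  cases n with
  | zero => exact i.elim0
  | succ m =>
  have ht : IsQMat q t := ⟨hrow, hcol, hcross, hmix⟩
  have hq0 : q ≠ 0 := hq ▸ RatFunc.X_ne_zero
  let X (b a : Fin (m + 1)) : A := qDet q (fun x y => t (b.succAbove x) (a.succAbove y))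
  -- `hL` and `hR` evaluate the same double sum, `t · adj t · t` up to the factor `(-q) ^ m`.
  have hL : ∑ b : Fin (m + 1), (-q) ^ (m - b : ℕ) •
      ((∑ a : Fin (m + 1), (-q) ^ (a : ℕ) • (t i a * X b a)) * t b j) =
      (-q) ^ m • (qDet q t * t i j) := by
    simp only [X, ht.laplace_row hq0]
    rw [Finset.sum_eq_single i (fun b _ hb => by simp [hb.symm]) (by simp), if_pos rfl,
      smul_mul_assoc, smul_smul, ← pow_add, Nat.sub_add_cancel i.is_le]
  have hR : ∑ a : Fin (m + 1), (-q) ^ (a : ℕ) •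
      (t i a * ∑ b : Fin (m + 1), (-q) ^ (m - b : ℕ) • (X b a * t b j)) =
      (-q) ^ m • (t i j * qDet q t) := by
    simp only [X, ht.laplace_col hq]
    rw [Finset.sum_eq_single j (fun b _ hb => by simp [hb.symm]) (by simp), if_pos rfl,
      mul_smul_comm, smul_smul, ← pow_add, Nat.add_sub_cancel' j.is_le]
  refine smul_right_injective A (pow_ne_zero m (neg_ne_zero.2 hq0)) ?_
  simp only []
  rw [← hL, ← hR]
  simp only [Finset.sum_mul, Finset.mul_sum, Finset.smul_sum, smul_mul_assoc, mul_smul_comm,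
    mul_assoc]
  rw [Finset.sum_comm]
  refine Finset.sum_congr rfl fun a _ => Finset.sum_congr rfl fun b _ => smul_comm _ _ _
end

section
/- Let U_q^P(b_+) be the subalgebra of U_q^P(gl_n) generated by G_1^{±1},…,G_n^{±1}, E_1,…,E_{n−1}, and let F_q^P[B_+] be the quantum function algebra of the upper Borel, i.e. the k(q)-algebra generated by the entries t_{ij} (i ≤ j) of an upper-triangular Hopf q-matrix together with (t_{11}t_{22}⋯t_{nn})^{−1}. Then the assignment G_i^{±1} ↦ t_{ii}^{±1}, E_j ↦ −(q − q^{−1})^{−1} t_{j,j+1} t_{j+1,j+1}^{−1} extends to an isomorphism of Hopf k(q)-algebras ζ_+ : U_q^P(b_+) → F_q^P[B_+]. -/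
/-!
# The quantum Borel algebra and the quantum functions on the Borel subgroup

The isomorphism is constructed through its inverse `psi : FqBp K q n → U_q(gl_n)`, over any field in
which `q`, `q - q⁻¹` and `1 + q ^ 2` are nonzero.

*Existence of `psi`.* The mixed `q`-matrix relation expresses each entry `t_{i,m+1}` with `i < m`
through `t_{im}`, `t_{m,m+1}` and `t_{mm}⁻¹`, so an upper triangular `q`-matrix is determined by its
diagonal and superdiagonal. Conversely, if elements `g i` and `x i` satisfy the skew commutation and
`q`-Serre relations of `BorelData`, then the matrix `BorelData.T` built from them by this recursion
is a `q`-matrix (`BorelData.qMat`). The proof is by induction on the number of columns: commuting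
with entries of earlier columns polarizes the Serre relations, and these polarizations are what the
relations between columns `m` and `m + 1` need. So `FqBp K q n` is presented by the relations of
`BorelData` (`FqBp.lift`), and applying this to `G_i` and `-(q - q⁻¹) E_i G_{i+1}` gives `psi`, whose
range is the Borel subalgebra.

*Injectivity of `psi`.* No basis theorem is used. Instead `U_q(gl_n)` is made to act on
`FqBp K q n` as on a universal Verma-type module (`FqBp.rho`): `G_i^{±1}` and `E_i` act by left
multiplication and `F_j` by a skew derivation killing `1`. The skew derivation exists because it is
the corner of an algebra map into upper triangular `2 × 2` matrices, which `FqBp.lift` provides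
(`BorelData.skew`). Its commutator with `E_j` is right by construction. The Serre relations among
the `F_j` hold because the corresponding operator kills `1` and skew commutes with multiplication by
all generators (`FqBp.eq_zero_of_generators`). As `rho ∘ psi` is left multiplication, `psi` is
injective.

*Hopf structure.* Both sides of the compatibility with the comultiplication, and with the counit,
are algebra maps, so they are compared on `G_i^{±1}` and `E_j`, where triangularity reduces
`Δ(t_{ii})` to one term and `Δ(t_{j,j+1})` to two.
-/

noncomputable section

/-- Generators of `U_q^P(gl_n)`: `E_1,…,E_{n−1}`, `F_1,…,F_{n−1}`,
`G_1^{+1},…,G_n^{+1}`, `G_1^{−1},…,G_n^{−1}` (0-indexed). -/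
inductive GlGen (n : ℕ) : Type
  | E : Fin (n - 1) → GlGen n
  | F : Fin (n - 1) → GlGen n
  | G : Fin n → GlGen n
  | Gi : Fin n → GlGen n

variable (K : Type) [Field K]

def fe (n : ℕ) (i : Fin (n - 1)) : FreeAlgebra K (GlGen n) := FreeAlgebra.ι K (GlGen.E i)
def ff (n : ℕ) (i : Fin (n - 1)) : FreeAlgebra K (GlGen n) := FreeAlgebra.ι K (GlGen.F i)
def fg (n : ℕ) (i : Fin n) : FreeAlgebra K (GlGen n) := FreeAlgebra.ι K (GlGen.G i)
def fgi (n : ℕ) (i : Fin n) : FreeAlgebra K (GlGen n) := FreeAlgebra.ι K (GlGen.Gi i)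

/-- The inclusion `Fin (n-1) → Fin n`, `i ↦ i` (the index `i` of `G_i`). -/
def idxlo {n : ℕ} (i : Fin (n - 1)) : Fin n := ⟨i.val, by have := i.isLt; omega⟩
/-- The inclusion `Fin (n-1) → Fin n`, `i ↦ i+1` (the index `i+1` of `G_{i+1}`). -/
def idxhi {n : ℕ} (i : Fin (n - 1)) : Fin n := ⟨i.val + 1, by have := i.isLt; omega⟩

/-- The defining relations of `U_q^P(gl_n)` (Chevalley–Serre type presentation). -/
inductive GlRel (q : K) (n : ℕ) : FreeAlgebra K (GlGen n) → FreeAlgebra K (GlGen n) → Prop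
  | ggi (i : Fin n) : GlRel q n (fg K n i * fgi K n i) 1
  | gig (i : Fin n) : GlRel q n (fgi K n i * fg K n i) 1
  | gg (i j : Fin n) : GlRel q n (fg K n i * fg K n j) (fg K n j * fg K n i)
  | ggi' (i j : Fin n) : GlRel q n (fg K n i * fgi K n j) (fgi K n j * fg K n i)
  | gigi (i j : Fin n) : GlRel q n (fgi K n i * fgi K n j) (fgi K n j * fgi K n i)
  | gf (i : Fin n) (j : Fin (n - 1)) :
      GlRel q n (fg K n i * ff K n j)
        ((q ^ (((if i.val = j.val + 1 then 1 else 0) - (if i.val = j.val then 1 else 0)) : ℤ)) •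
          (ff K n j * fg K n i))
  | ge (i : Fin n) (j : Fin (n - 1)) :
      GlRel q n (fg K n i * fe K n j)
        ((q ^ (((if i.val = j.val then 1 else 0) - (if i.val = j.val + 1 then 1 else 0)) : ℤ)) •
          (fe K n j * fg K n i))
  | ef (i j : Fin (n - 1)) :
      GlRel q n (fe K n i * ff K n j)
        (ff K n j * fe K n i +
          (if i = j then
            (q - q⁻¹)⁻¹ • (fg K n (idxlo i) * fgi K n (idxhi i) -
              fgi K n (idxlo i) * fg K n (idxhi i))
          else 0))
  | ee (i j : Fin (n - 1)) (h : i.val + 1 < j.val ∨ j.val + 1 < i.val) :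
      GlRel q n (fe K n i * fe K n j) (fe K n j * fe K n i)
  | ffcomm (i j : Fin (n - 1)) (h : i.val + 1 < j.val ∨ j.val + 1 < i.val) :
      GlRel q n (ff K n i * ff K n j) (ff K n j * ff K n i)
  | serreE (i j : Fin (n - 1)) (h : i.val + 1 = j.val ∨ j.val + 1 = i.val) :
      GlRel q n (fe K n i * fe K n i * fe K n j + fe K n j * (fe K n i * fe K n i))
        ((q + q⁻¹) • (fe K n i * fe K n j * fe K n i))
  | serreF (i j : Fin (n - 1)) (h : i.val + 1 = j.val ∨ j.val + 1 = i.val) :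
      GlRel q n (ff K n i * ff K n i * ff K n j + ff K n j * (ff K n i * ff K n i))
        ((q + q⁻¹) • (ff K n i * ff K n j * ff K n i))

/-- `U_q^P(gl_n)`, presented by Chevalley-type generators and relations. -/
def Uq (q : K) (n : ℕ) : Type := RingQuot (GlRel K q n)

instance (q : K) (n : ℕ) : Ring (Uq K q n) :=
  inferInstanceAs (Ring (RingQuot (GlRel K q n)))

instance (q : K) (n : ℕ) : Algebra K (Uq K q n) :=
  inferInstanceAs (Algebra K (RingQuot (GlRel K q n)))

def uE (q : K) (n : ℕ) (i : Fin (n - 1)) : Uq K q n :=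
  RingQuot.mkAlgHom K (GlRel K q n) (fe K n i)
def uF (q : K) (n : ℕ) (i : Fin (n - 1)) : Uq K q n :=
  RingQuot.mkAlgHom K (GlRel K q n) (ff K n i)
def uG (q : K) (n : ℕ) (i : Fin n) : Uq K q n :=
  RingQuot.mkAlgHom K (GlRel K q n) (fg K n i)
def uGi (q : K) (n : ℕ) (i : Fin n) : Uq K q n :=
  RingQuot.mkAlgHom K (GlRel K q n) (fgi K n i)

/-- `E_i`, `F_i`, `G_i^{±1}` indexed by natural numbers (junk value `0` out of range). -/
def eN (q : K) (n : ℕ) (i : ℕ) : Uq K q n := if h : i < n - 1 then uE K q n ⟨i, h⟩ else 0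
def fN (q : K) (n : ℕ) (i : ℕ) : Uq K q n := if h : i < n - 1 then uF K q n ⟨i, h⟩ else 0
def gN (q : K) (n : ℕ) (i : ℕ) : Uq K q n := if h : i < n then uG K q n ⟨i, h⟩ else 0
def giN (q : K) (n : ℕ) (i : ℕ) : Uq K q n := if h : i < n then uGi K q n ⟨i, h⟩ else 0

open scoped TensorProduct

/-- Generators of `F_q^P[B_+]`: the entries `t_{ij}` and the inverse `d⁻¹` of the
quantum determinant `t_{11}⋯t_{nn}`. -/
inductive BpGen (n : ℕ) : Type
  | t : Fin n → Fin n → BpGen n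
  | dinv : BpGen n

def bt (n : ℕ) (i j : Fin n) : FreeAlgebra K (BpGen n) := FreeAlgebra.ι K (BpGen.t i j)
def bdinv (n : ℕ) : FreeAlgebra K (BpGen n) := FreeAlgebra.ι K (BpGen.dinv)

/-- The defining relations of `F_q^P[B_+]`: the q-matrix relations, the
upper-triangularity relations `t_{ij} = 0` for `i > j`, and the invertibility of
`t_{11} t_{22} ⋯ t_{nn}`. -/
inductive BpRel (q : K) (n : ℕ) : FreeAlgebra K (BpGen n) → FreeAlgebra K (BpGen n) → Prop
  | row (i j l : Fin n) (h : j < l) :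
      BpRel q n (bt K n i j * bt K n i l) (q • (bt K n i l * bt K n i j))
  | col (i h l : Fin n) (hlt : i < h) :
      BpRel q n (bt K n i l * bt K n h l) (q • (bt K n h l * bt K n i l))
  | cross (i j l m : Fin n) (h1 : i < j) (h2 : l < m) :
      BpRel q n (bt K n i m * bt K n j l) (bt K n j l * bt K n i m)
  | mix (i j l m : Fin n) (h1 : i < j) (h2 : l < m) :
      BpRel q n (bt K n i l * bt K n j m - bt K n j m * bt K n i l)
        ((q - q⁻¹) • (bt K n i m * bt K n j l))
  | tri (i j : Fin n) (h : j < i) : BpRel q n (bt K n i j) 0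
  | detinv1 :
      BpRel q n ((((List.finRange n).map (fun i => bt K n i i)).prod) * bdinv K n) 1
  | detinv2 :
      BpRel q n (bdinv K n * (((List.finRange n).map (fun i => bt K n i i)).prod)) 1

/-- The quantum function algebra `F_q^P[B_+]` of the upper Borel subgroup. -/
def FqBp (q : K) (n : ℕ) : Type := RingQuot (BpRel K q n)

instance (q : K) (n : ℕ) : Ring (FqBp K q n) :=
  inferInstanceAs (Ring (RingQuot (BpRel K q n)))
instance (q : K) (n : ℕ) : Algebra K (FqBp K q n) :=
  inferInstanceAs (Algebra K (RingQuot (BpRel K q n)))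

def bT (q : K) (n : ℕ) (i j : Fin n) : FqBp K q n :=
  RingQuot.mkAlgHom K (BpRel K q n) (bt K n i j)
def bDinv (q : K) (n : ℕ) : FqBp K q n :=
  RingQuot.mkAlgHom K (BpRel K q n) (bdinv K n)

/-- The quantum Borel subalgebra `U_q^P(b_+)`: the subalgebra of `U_q^P(gl_n)`
generated by `G_1^{±1},…,G_n^{±1}, E_1,…,E_{n−1}`. -/
def UbP (q : K) (n : ℕ) : Subalgebra K (Uq K q n) :=
  Algebra.adjoin K
    {x | (∃ i, x = uG K q n i) ∨ (∃ i, x = uGi K q n i) ∨ (∃ j, x = uE K q n j)}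

def sG (q : K) (n : ℕ) (i : Fin n) : UbP K q n :=
  ⟨uG K q n i, Algebra.subset_adjoin (Or.inl ⟨i, rfl⟩)⟩
def sGi (q : K) (n : ℕ) (i : Fin n) : UbP K q n :=
  ⟨uGi K q n i, Algebra.subset_adjoin (Or.inr (Or.inl ⟨i, rfl⟩))⟩
def sE (q : K) (n : ℕ) (j : Fin (n - 1)) : UbP K q n :=
  ⟨uE K q n j, Algebra.subset_adjoin (Or.inr (Or.inr ⟨j, rfl⟩))⟩

set_option synthInstance.maxHeartbeats 1000000
set_option maxHeartbeats 2000000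

/-! ### Identities in a noncommutative ring behind the column induction -/

set_option linter.unusedSimpArgs false

section Core

variable {K : Type} [Field K] {A : Type} [Ring A] [Algebra K A]

/-- An equation `u * v = w` as a rewrite rule inside right-associated products. -/
theorem reas {u v w : A} (h : u * v = w) (z : A) : u * (v * z) = w * z := by
  rw [← mul_assoc, h]

theorem cancel_right {d di u v : A} (hd : d * di = 1) (h : u * d = v * d) : u = v := by
  have := congrArg (· * di) h
  simpa [mul_assoc, hd] using this

theorem smul_cancel {c : K} (hc : c ≠ 0) {u v : A} (h : c • u = c • v) : u = v :=
  (smul_right_injective A hc) h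

/-- One commutator with `t` turns a `q`-Serre relation between `b` and `x` into its polarization in
`a` and `b`. Here `a, b` stand for two entries `t_{im}, t_{jm}` (`i < j`) of one column, `x` for
`t_{m,m+1}`, `d` for `t_{jj}` and `t` for `t_{ij}`; commuting with `t` replaces `b` by `a * d`. -/
theorem polarize_one {q c : K} (hc : c ≠ 0) (h2 : 1 + q ^ 2 ≠ 0) {a b x t d di : A}
    (hd : d * di = 1)
    (hS : b * b * x + q ^ 2 • (x * b * b) = (1 + q ^ 2) • (b * x * b))
    (htx : t * x = x * t) (htb : t * b = b * t + c • (a * d))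
    (hdb : d * b = q • (b * d)) (hdx : d * x = x * d)
    (hab : a * b = q • (b * a)) :
    b * a * x + q ^ 2 • (x * b * a) = q • (a * x * b) + b * x * a := by
  apply cancel_right hd
  apply smul_cancel (mul_ne_zero hc h2)
  have e1 := congrArg (t * ·) hS
  have e2 := congrArg (· * t) hS
  simp only [mul_add, add_mul, smul_mul_assoc, mul_smul_comm, smul_smul, smul_add, mul_assoc,
    htx, reas htx, htb, reas htb, hdb, reas hdb, hdx, reas hdx, reas hab]
    at e1 e2 ⊢
  linear_combination (norm := skip) (1 : K) • e1 - (1 : K) • e2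
  match_scalars <;> ring

/-- A second commutator with `t` turns the polarized relation of `polarize_one` into the `q`-Serre
relation between `a` and `x`. -/
theorem polarize_two {q c : K} (hc : c ≠ 0) {a b x t d di : A}
    (hd : d * di = 1)
    (hP : b * a * x + q ^ 2 • (x * b * a) = q • (a * x * b) + b * x * a)
    (htx : t * x = x * t) (htb : t * b = b * t + c • (a * d)) (hta : t * a = q • (a * t))
    (hda : d * a = a * d) (hdx : d * x = x * d) :
    a * a * x + q ^ 2 • (x * a * a) = (1 + q ^ 2) • (a * x * a) := by
  apply cancel_right hd
  apply smul_cancel hc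
  have e1 := congrArg (t * ·) hP
  have e2 := congrArg (· * t) hP
  simp only [mul_add, add_mul, smul_mul_assoc, mul_smul_comm, smul_smul, smul_add, mul_assoc,
    htx, reas htx, htb, reas htb, hta, reas hta, hda, reas hda, hdx, reas hdx]
    at e1 e2 ⊢
  linear_combination (norm := skip) (1 : K) • e1 - q • e2
  match_scalars <;> ring

/-- Skew commutation with `t` passes from `a`, `x` and `g` to the new entry `y` defined by
`c • (y * g) = a * x - x * a`. In this and the following lemmas `y` (and likewise `z`, with `b` in
place of `a`) is an entry `t_{i,m+1}`, built from `a = t_{im}`, `x = t_{m,m+1}` and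
`g = t_{mm}`. -/
theorem skew_push {r s p c : K} (hc : c ≠ 0) {a x y g gi t : A}
    (hg : g * gi = 1) (hy : c • (y * g) = a * x - x * a)
    (hta : t * a = r • (a * t)) (htx : t * x = s • (x * t)) (htg : t * g = p • (g * t)) :
    p • (t * y) = (r * s) • (y * t) := by
  apply cancel_right hg
  apply smul_cancel hc
  have e1 := congrArg (t * ·) hy
  have e2 := congrArg (· * t) hy
  simp only [mul_add, add_mul, mul_sub, sub_mul, smul_mul_assoc, mul_smul_comm, smul_smul,
    smul_add, mul_assoc, htx, reas htx, hta, reas hta, htg] at e1 e2 ⊢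
  linear_combination (norm := skip) p • e1 - (r * s * p) • e2
  match_scalars <;> ring

theorem skew_comm {c : K} (hc : c ≠ 0) {a x y g gi t : A}
    (hg : g * gi = 1) (hy : c • (y * g) = a * x - x * a)
    (hta : t * a = a * t) (htx : t * x = x * t) (htg : t * g = g * t) :
    t * y = y * t := by
  have := skew_push (r := 1) (s := 1) (p := 1) hc hg hy (by simpa using hta) (by simpa using htx)
    (by simpa using htg)
  simpa using this

/-- The row relation between neighbouring columns amounts to the `q`-Serre relation of degree two
in `a`. -/
theorem row_last {q c : K} (hc : c ≠ 0) {a x y g gi : A}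
    (hg : g * gi = 1) (hy : c • (y * g) = a * x - x * a) (hag : a * g = q • (g * a))
    (hS : a * a * x + q ^ 2 • (x * a * a) = (1 + q ^ 2) • (a * x * a)) :
    a * y = q • (y * a) := by
  apply cancel_right hg
  apply smul_cancel hc
  have e1 := congrArg (a * ·) hy
  have e2 := congrArg (· * a) hy
  simp only [mul_add, add_mul, mul_sub, sub_mul, smul_mul_assoc, mul_smul_comm, smul_smul,
    smul_add, mul_assoc, hag] at e1 e2 hS ⊢
  linear_combination (norm := skip) (1 : K) • e1 - (q ^ 2) • e2 + (1 : K) • hS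
  match_scalars <;> ring

/-- The column relation between `t_{i,m+1}` and `t_{m,m+1}` amounts to the `q`-Serre relation of
degree two in `x`. -/
theorem col_last {q c : K} (hq : q ≠ 0) (hc : c ≠ 0) {a x y g gi : A}
    (hg : g * gi = 1) (hy : c • (y * g) = a * x - x * a) (hgx : g * x = q • (x * g))
    (hS : a * x * x + q ^ 2 • (x * x * a) = (1 + q ^ 2) • (x * a * x)) :
    y * x = q • (x * y) := by
  apply cancel_right hg
  apply smul_cancel (mul_ne_zero hc hq)
  have e1 := congrArg (x * ·) hy
  have e2 := congrArg (· * x) hy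
  simp only [mul_add, add_mul, mul_sub, sub_mul, smul_mul_assoc, mul_smul_comm, smul_smul,
    smul_add, mul_assoc, hgx] at e1 e2 hS ⊢
  linear_combination (norm := skip) (1 : K) • e2 - (q ^ 2) • e1 + (1 : K) • hS
  match_scalars <;> ring

/-- The commutation of `t_{i,m+1}` with `t_{jm}` amounts to the polarized Serre relation. -/
theorem cross_last {q c : K} (hc : c ≠ 0) {a b x y g gi : A}
    (hg : g * gi = 1) (hy : c • (y * g) = a * x - x * a) (hbg : b * g = q • (g * b))
    (hab : a * b = q • (b * a))
    (hP : b * a * x + q ^ 2 • (x * b * a) = q • (a * x * b) + b * x * a) :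
    y * b = b * y := by
  apply cancel_right hg
  apply smul_cancel hc
  have e1 := congrArg (b * ·) hy
  have e2 := congrArg (· * b) hy
  simp only [mul_add, add_mul, mul_sub, sub_mul, smul_mul_assoc, mul_smul_comm, smul_smul,
    smul_add, mul_assoc, hbg, hab] at e1 e2 hP ⊢
  linear_combination (norm := skip) q • e2 - (1 : K) • e1 - (1 : K) • hP
  match_scalars <;> ring

/-- The mixed relation between `t_{im}` and `t_{j,m+1}` amounts to the polarized Serre relation. -/
theorem mix_last {q c : K} (hq : q ≠ 0) (hc : c ≠ 0) (hcq : c * q = q ^ 2 - 1) {a b x y z g gi : A}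
    (hg : g * gi = 1) (hy : c • (y * g) = a * x - x * a) (hz : c • (z * g) = b * x - x * b)
    (hag : a * g = q • (g * a)) (hbg : b * g = q • (g * b)) (hab : a * b = q • (b * a))
    (hP : b * a * x + q ^ 2 • (x * b * a) = q • (a * x * b) + b * x * a) :
    a * z - z * a = c • (y * b) := by
  have hcq' : c = q - q⁻¹ := by field_simp; rw [hcq]
  apply cancel_right hg
  apply smul_cancel hc
  have e1 := congrArg (a * ·) hz
  have e2 := congrArg (· * a) hz
  have e3 := congrArg (· * b) hy
  simp only [mul_add, add_mul, mul_sub, sub_mul, smul_mul_assoc, mul_smul_comm, smul_smul,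
    smul_add, smul_sub, mul_assoc, hag, hbg, hab, reas hab] at e1 e2 e3 hP ⊢
  linear_combination (norm := skip) (1 : K) • e1 - q • e2 - (c * q) • e3 + q • hP
  subst hcq'
  match_scalars <;> field_simp <;> ring

/-- The mixed relation passes from column `m` to column `m + 1` when the entries `t`, `d` lie in a
column to the left of `m`. -/
theorem mix_push {c : K} (hc : c ≠ 0) {a b x y z g gi t d : A}
    (hg : g * gi = 1) (hy : c • (y * g) = a * x - x * a) (hz : c • (z * g) = b * x - x * b)
    (htx : t * x = x * t) (htg : t * g = g * t) (hdx : d * x = x * d) (hdg : d * g = g * d)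
    (htb : t * b = b * t + c • (a * d)) :
    t * z - z * t = c • (y * d) := by
  apply cancel_right hg
  apply smul_cancel hc
  have e1 := congrArg (t * ·) hz
  have e2 := congrArg (· * t) hz
  have e3 := congrArg (· * d) hy
  simp only [mul_add, add_mul, mul_sub, sub_mul, smul_mul_assoc, mul_smul_comm, smul_smul,
    smul_add, smul_sub, mul_assoc, htx, htg, htb, hdx, hdg, reas htx, reas htb] at e1 e2 e3 ⊢
  linear_combination (norm := skip) (1 : K) • e1 - (1 : K) • e2 - c • e3
  match_scalars <;> ring

/-- The column relation between two entries `y`, `z` of column `m + 1` above the superdiagonal,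
deduced from their relations with `x = t_{m,m+1}` and the mixed relation. -/
theorem col_push {q c : K} (hq : q ≠ 0) (hc : c ≠ 0) (hcq : c * q = q ^ 2 - 1)
    {a b x y z g gi : A}
    (hg : g * gi = 1) (hy : c • (y * g) = a * x - x * a) (hz : c • (z * g) = b * x - x * b)
    (hyx : y * x = q • (x * y)) (hzx : z * x = q • (x * z)) (hgz : g * z = z * g)
    (haz : a * z - z * a = c • (y * b)) :
    y * z = q • (z * y) := by
  have hyx' : x * y = q⁻¹ • (y * x) := by rw [hyx, smul_smul, inv_mul_cancel₀ hq, one_smul]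
  have hzx' : x * z = q⁻¹ • (z * x) := by rw [hzx, smul_smul, inv_mul_cancel₀ hq, one_smul]
  have haz' : a * z = z * a + c • (y * b) := by rw [← haz]; abel
  have hcq' : c = q - q⁻¹ := by field_simp; rw [hcq]
  apply cancel_right hg
  apply smul_cancel hc
  have e1 := congrArg (· * z) hy
  have e2 := congrArg (y * ·) hz
  have e3 := congrArg (z * ·) hy
  simp only [mul_add, add_mul, mul_sub, sub_mul, smul_mul_assoc, mul_smul_comm, smul_smul,
    smul_add, smul_sub, mul_assoc, hzx', haz', hgz, reas hyx', reas hzx', reas haz'] at e1 e2 e3 ⊢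
  linear_combination (norm := skip) (q ^ 2) • e1 - (q * c) • e2 - q • e3
  subst hcq'
  match_scalars <;> field_simp <;> ring

/-- A commutator with `t` carries the `q`-Serre relation of degree two in `x` from `b` to `a`. -/
theorem serre_push {q c : K} (hc : c ≠ 0) {a b x t d di : A}
    (hd : d * di = 1)
    (hS : b * x * x + q ^ 2 • (x * x * b) = (1 + q ^ 2) • (x * b * x))
    (htx : t * x = x * t) (htb : t * b = b * t + c • (a * d)) (hdx : d * x = x * d) :
    a * x * x + q ^ 2 • (x * x * a) = (1 + q ^ 2) • (x * a * x) := by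
  apply cancel_right hd
  apply smul_cancel hc
  have e1 := congrArg (t * ·) hS
  have e2 := congrArg (· * t) hS
  simp only [mul_add, add_mul, smul_mul_assoc, mul_smul_comm, smul_smul, smul_add, mul_assoc,
    htx, reas htx, htb, reas htb, hdx, reas hdx] at e1 e2 ⊢
  linear_combination (norm := skip) (1 : K) • e1 - (1 : K) • e2
  match_scalars <;> ring

end Core

/-! ### From the Serre relations to the q-matrix relations -/

/-- The relations satisfied by the diagonal entries `g i = t_{ii}`, their inverses `gi i` and the
superdiagonal entries `x i = t_{i,i+1}` of an upper triangular `q`-matrix of size `ℕ × ℕ`. Finite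
matrices are covered by extending them with the identity matrix, so that no index bounds are
needed. -/
structure BorelData (K : Type) [Field K] (q : K) (A : Type) [Ring A] [Algebra K A] where
  g : ℕ → A
  gi : ℕ → A
  x : ℕ → A
  g_gi : ∀ i, g i * gi i = 1
  gi_g : ∀ i, gi i * g i = 1
  g_g : ∀ i j, g i * g j = g j * g i
  g_x_self : ∀ i, g i * x i = q • (x i * g i)
  x_g_succ : ∀ i, x i * g (i + 1) = q • (g (i + 1) * x i)
  g_x : ∀ i j, i ≠ j → i ≠ j + 1 → g i * x j = x j * g i
  x_x : ∀ i j, i + 1 < j → x i * x j = x j * x i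
  serre_left : ∀ i, x i * x i * x (i + 1) + q ^ 2 • (x (i + 1) * x i * x i) =
    (1 + q ^ 2) • (x i * x (i + 1) * x i)
  serre_right : ∀ i, x i * x (i + 1) * x (i + 1) + q ^ 2 • (x (i + 1) * x (i + 1) * x i) =
    (1 + q ^ 2) • (x (i + 1) * x i * x (i + 1))

namespace BorelData

variable {K : Type} [Field K] {q : K} {A : Type} [Ring A] [Algebra K A] (D : BorelData K q A)

/-- The upper triangular matrix with diagonal `g` and superdiagonal `x` whose remaining entries are
forced by the mixed relation `(q - q⁻¹) • (T i (m+1) * g m) = T i m * x m - x m * T i m`. -/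
def T (i : ℕ) : ℕ → A
  | 0 => if i = 0 then D.g 0 else 0
  | m + 1 => if i = m + 1 then D.g (m + 1) else if i = m then D.x m else
      if i < m then (q - q⁻¹)⁻¹ • ((T i m * D.x m - D.x m * T i m) * D.gi m) else 0

theorem T_self (i : ℕ) : D.T i i = D.g i := by
  cases i <;> simp [T]

theorem T_succ (i : ℕ) : D.T i (i + 1) = D.x i := by
  simp [T]

theorem T_zero {i j : ℕ} (h : j < i) : D.T i j = 0 := by
  cases j with
  | zero => rw [T, if_neg (by omega)]
  | succ m => rw [T, if_neg (by omega), if_neg (by omega), if_neg (by omega)]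

theorem T_rec (hc : q - q⁻¹ ≠ 0) {i m : ℕ} (h : i < m) :
    (q - q⁻¹) • (D.T i (m + 1) * D.g m) = D.T i m * D.x m - D.x m * D.T i m := by
  rw [T, if_neg (by omega), if_neg (by omega), if_pos h, smul_mul_assoc, smul_smul,
    mul_inv_cancel₀ hc, one_smul, mul_assoc, D.gi_g, mul_one]

theorem g_T (hc : q - q⁻¹ ≠ 0) (l i j : ℕ) (h : j < l) : D.g l * D.T i j = D.T i j * D.g l := by
  induction j with
  | zero =>
    rcases Nat.eq_zero_or_pos i with rfl | hi
    · rw [T_self, D.g_g]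
    · simp [D.T_zero hi]
  | succ m ih =>
    rcases lt_trichotomy i m with hi | rfl | hi
    · exact skew_comm hc (D.g_gi m) (D.T_rec hc hi) (ih (by omega))
        (D.g_x _ _ (by omega) (by omega)) (D.g_g _ _)
    · rw [T_succ, D.g_x _ _ (by omega) (by omega)]
    · rcases Nat.lt_or_ge (m + 1) i with h2 | h2
      · simp [D.T_zero h2]
      · obtain rfl : i = m + 1 := by omega
        rw [T_self, D.g_g]

theorem x_T (hc : q - q⁻¹ ≠ 0) (l i j : ℕ) (h : j < l) : D.x l * D.T i j = D.T i j * D.x l := by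
  induction j with
  | zero =>
    rcases Nat.eq_zero_or_pos i with rfl | hi
    · rw [T_self, D.g_x _ _ (by omega) (by omega)]
    · simp [D.T_zero hi]
  | succ m ih =>
    rcases lt_trichotomy i m with hi | rfl | hi
    · exact skew_comm hc (D.g_gi m) (D.T_rec hc hi) (ih (by omega))
        (D.x_x _ _ (by omega)).symm (D.g_x _ _ (by omega) (by omega)).symm
    · rw [T_succ]; exact (D.x_x _ _ (by omega)).symm
    · rcases Nat.lt_or_ge (m + 1) i with h2 | h2
      · simp [D.T_zero h2]
      · obtain rfl : i = m + 1 := by omega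
        rw [T_self, D.g_x _ _ (by omega) (by omega)]

/-- The `q`-matrix relations for the entries of `T` in the columns `0, …, m`. -/
structure QMat (m : ℕ) : Prop where
  row : ∀ i j l, j < l → l ≤ m → D.T i j * D.T i l = q • (D.T i l * D.T i j)
  col : ∀ i h l, i < h → l ≤ m → D.T i l * D.T h l = q • (D.T h l * D.T i l)
  cross : ∀ i j l p, i < j → l < p → p ≤ m → D.T i p * D.T j l = D.T j l * D.T i p
  mix : ∀ i j l p, i < j → l < p → p ≤ m →
    D.T i l * D.T j p - D.T j p * D.T i l = (q - q⁻¹) • (D.T i p * D.T j l)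

variable {D}

namespace QMat

variable {m : ℕ}

theorem mix' (Q : D.QMat m) {i j l p : ℕ} (h1 : i < j) (h2 : l < p) (h3 : p ≤ m) :
    D.T i l * D.T j p = D.T j p * D.T i l + (q - q⁻¹) • (D.T i p * D.T j l) := by
  rw [← Q.mix i j l p h1 h2 h3]; abel

theorem T_g (Q : D.QMat m) {i : ℕ} (h : i < m) : D.T i m * D.g m = q • (D.g m * D.T i m) := by
  have := Q.col i m m h le_rfl
  rwa [T_self] at this

/-- The polarized Serre relation for two entries of column `m`, given the Serre relation for the
lower one. -/
theorem polarized_of_serre (Q : D.QMat m) (hc : q - q⁻¹ ≠ 0) (h2 : 1 + q ^ 2 ≠ 0) {i j : ℕ} (hij : i < j)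
    (hjm : j < m)
    (hS : D.T j m * D.T j m * D.x m + q ^ 2 • (D.x m * D.T j m * D.T j m) =
      (1 + q ^ 2) • (D.T j m * D.x m * D.T j m)) :
    D.T j m * D.T i m * D.x m + q ^ 2 • (D.x m * D.T j m * D.T i m) =
      q • (D.T i m * D.x m * D.T j m) + D.T j m * D.x m * D.T i m := by
  have hmix := Q.mix' hij hjm le_rfl
  have hrow := Q.row j j m hjm le_rfl
  rw [T_self] at hmix hrow
  exact polarize_one hc h2 (D.g_gi j) hS (D.x_T hc _ _ _ hjm).symm hmix hrow
    (D.g_x _ _ (by omega) (by omega)) (Q.col i j m hij le_rfl)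

/-- Every entry of column `m` above the diagonal satisfies the `q`-Serre relation of degree two in
it and one in `x m`, not only the superdiagonal entry `x (m - 1)`. -/
theorem serre (Q : D.QMat m) (hc : q - q⁻¹ ≠ 0) (h2 : 1 + q ^ 2 ≠ 0) {i : ℕ} (him : i < m) :
    D.T i m * D.T i m * D.x m + q ^ 2 • (D.x m * D.T i m * D.T i m) =
      (1 + q ^ 2) • (D.T i m * D.x m * D.T i m) := by
  obtain ⟨p, rfl⟩ : ∃ p, m = p + 1 := ⟨m - 1, by omega⟩
  rcases Nat.lt_or_ge i p with hip | hip
  · have hP := Q.polarized_of_serre hc h2 hip (Nat.lt_succ_self p)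
      (by simpa only [T_succ] using D.serre_left p)
    have hmix := Q.mix' hip (Nat.lt_succ_self p) le_rfl
    have hcross := Q.cross i p p (p + 1) hip (Nat.lt_succ_self p) le_rfl
    rw [T_self] at hmix hcross
    exact polarize_two hc (D.g_gi p) hP (D.x_T hc _ _ _ (Nat.lt_succ_self p)).symm hmix
      (Q.row i p (p + 1) (Nat.lt_succ_self p) le_rfl) hcross.symm
      (D.g_x _ _ (by omega) (by omega))
  · obtain rfl : i = p := by omega
    simpa only [T_succ] using D.serre_left i

theorem polarized (Q : D.QMat m) (hc : q - q⁻¹ ≠ 0) (h2 : 1 + q ^ 2 ≠ 0) {i j : ℕ} (hij : i < j)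
    (hjm : j < m) :
    D.T j m * D.T i m * D.x m + q ^ 2 • (D.x m * D.T j m * D.T i m) =
      q • (D.T i m * D.x m * D.T j m) + D.T j m * D.x m * D.T i m :=
  Q.polarized_of_serre hc h2 hij hjm (Q.serre hc h2 hjm)

/-- Every entry of column `m` above the diagonal satisfies the `q`-Serre relation of degree one in
it and two in `x m`. -/
theorem serre' (Q : D.QMat m) (hc : q - q⁻¹ ≠ 0) {i : ℕ} (him : i < m) :
    D.T i m * D.x m * D.x m + q ^ 2 • (D.x m * D.x m * D.T i m) =
      (1 + q ^ 2) • (D.x m * D.T i m * D.x m) := by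
  obtain ⟨p, rfl⟩ : ∃ p, m = p + 1 := ⟨m - 1, by omega⟩
  rcases Nat.lt_or_ge i p with hip | hip
  · have hmix := Q.mix' hip (Nat.lt_succ_self p) le_rfl
    rw [T_self, T_succ] at hmix
    exact serre_push hc (D.g_gi p) (D.serre_right p) (D.x_T hc _ _ _ (Nat.lt_succ_self p)).symm
      hmix (D.g_x _ _ (by omega) (by omega))
  · obtain rfl : i = p := by omega
    simpa only [T_succ] using D.serre_right i

theorem row_succ (Q : D.QMat m) (hc : q - q⁻¹ ≠ 0) (h2 : 1 + q ^ 2 ≠ 0) {i j : ℕ} (hj : j ≤ m) :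
    D.T i j * D.T i (m + 1) = q • (D.T i (m + 1) * D.T i j) := by
  rcases Nat.lt_or_ge j i with h | hij
  · simp [D.T_zero h]
  rcases Nat.lt_or_ge j m with hjm | hjm
  · have := skew_push (r := q) (s := 1) (p := 1) hc (D.g_gi m) (D.T_rec hc (by omega : i < m))
      (Q.row i j m hjm le_rfl) (by simpa using (D.x_T hc m i j hjm).symm)
      (by simpa using (D.g_T hc m i j hjm).symm)
    simpa using this
  · obtain rfl : j = m := by omega
    rcases Nat.lt_or_ge i j with him | him
    · exact row_last hc (D.g_gi j) (D.T_rec hc him) (Q.T_g him) (Q.serre hc h2 him)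
    · obtain rfl : i = j := by omega
      rw [T_self, T_succ, D.g_x_self]

theorem cross_succ (Q : D.QMat m) (hq : q ≠ 0) (hc : q - q⁻¹ ≠ 0) (h2 : 1 + q ^ 2 ≠ 0) {i j l : ℕ} (hij : i < j)
    (hl : l ≤ m) :
    D.T i (m + 1) * D.T j l = D.T j l * D.T i (m + 1) := by
  rcases Nat.lt_or_ge l j with h | hjl
  · simp [D.T_zero h]
  have him : i < m := by omega
  rcases Nat.lt_or_ge l m with hlm | hlm
  · exact (skew_comm hc (D.g_gi m) (D.T_rec hc him) (Q.cross i j l m hij hlm le_rfl).symm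
      (D.x_T hc m j l hlm).symm (D.g_T hc m j l hlm).symm).symm
  · obtain rfl : l = m := by omega
    rcases Nat.lt_or_ge j l with hj | hj
    · exact cross_last hc (D.g_gi l) (D.T_rec hc him) (Q.T_g hj) (Q.col i j l hij le_rfl)
        (Q.polarized hc h2 hij hj)
    · obtain rfl : j = l := by omega
      have := skew_push (r := q⁻¹) (s := q) (p := 1) hc (D.g_gi j) (D.T_rec hc him)
        (t := D.g j) (by rw [Q.T_g him, smul_smul, inv_mul_cancel₀ hq, one_smul])
        (D.g_x_self j) (by simp)
      rw [T_self]
      simpa [hq] using this.symm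

theorem mix_succ (Q : D.QMat m) (hq : q ≠ 0) (hc : q - q⁻¹ ≠ 0) (h2 : 1 + q ^ 2 ≠ 0) {i j l : ℕ} (hij : i < j)
    (hl : l ≤ m) :
    D.T i l * D.T j (m + 1) - D.T j (m + 1) * D.T i l =
      (q - q⁻¹) • (D.T i (m + 1) * D.T j l) := by
  have hcq : (q - q⁻¹) * q = q ^ 2 - 1 := by field_simp
  rcases lt_trichotomy j m with hj | rfl | hj
  · rcases Nat.lt_or_ge l m with hlm | hlm
    · exact mix_push hc (D.g_gi m) (D.T_rec hc (by omega)) (D.T_rec hc hj)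
        (D.x_T hc _ _ _ hlm).symm (D.g_T hc _ _ _ hlm).symm (D.x_T hc _ _ _ hlm).symm
        (D.g_T hc _ _ _ hlm).symm (Q.mix' hij hlm le_rfl)
    · obtain rfl : l = m := by omega
      exact mix_last hq hc hcq (D.g_gi l) (D.T_rec hc (by omega)) (D.T_rec hc hj)
        (Q.T_g (by omega)) (Q.T_g hj) (Q.col i j l hij le_rfl) (Q.polarized hc h2 hij hj)
  · rcases Nat.lt_or_ge l j with hlm | hlm
    · rw [T_succ, D.x_T hc _ _ _ hlm, D.T_zero hlm]; simp
    · obtain rfl : l = j := by omega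
      rw [T_succ, T_self, D.T_rec hc hij]
  · rw [D.T_zero (by omega : l < j)]
    rcases Nat.lt_or_ge (m + 1) j with h | h
    · simp [D.T_zero h]
    · obtain rfl : j = m + 1 := by omega
      rw [T_self, D.g_T hc _ _ _ (by omega)]; simp

theorem col_succ (Q : D.QMat m) (hq : q ≠ 0) (hc : q - q⁻¹ ≠ 0) (h2 : 1 + q ^ 2 ≠ 0) {i h : ℕ} (hih : i < h) :
    D.T i (m + 1) * D.T h (m + 1) = q • (D.T h (m + 1) * D.T i (m + 1)) := by
  have hcq : (q - q⁻¹) * q = q ^ 2 - 1 := by field_simp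
  have hlast : ∀ {i}, i < m → D.T i (m + 1) * D.x m = q • (D.x m * D.T i (m + 1)) := fun hi =>
    col_last hq hc (D.g_gi m) (D.T_rec hc hi) (D.g_x_self m) (Q.serre' hc hi)
  rcases lt_trichotomy h m with hm | rfl | hm
  · exact col_push hq hc hcq (D.g_gi m) (D.T_rec hc (by omega)) (D.T_rec hc hm)
      (hlast (by omega)) (hlast hm)
      (by have := Q.cross_succ hq hc h2 hm le_rfl; rw [T_self] at this; exact this.symm)
      (Q.mix_succ hq hc h2 hih le_rfl)
  · rw [T_succ]; exact hlast hih
  · rcases Nat.lt_or_ge (m + 1) h with h3 | h3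
    · simp [D.T_zero h3]
    · obtain rfl : h = m + 1 := by omega
      rw [T_self]
      rcases Nat.lt_or_ge i m with hi | hi
      · have := skew_push (r := 1) (s := q⁻¹) (p := 1) (t := D.g (m + 1)) hc (D.g_gi m)
          (D.T_rec hc hi) (by simpa using D.g_T hc (m + 1) i m (by omega))
          (by rw [D.x_g_succ, smul_smul, inv_mul_cancel₀ hq, one_smul])
          (by simpa using D.g_g _ _)
        rw [one_smul, one_mul] at this
        rw [this, smul_smul, mul_inv_cancel₀ hq, one_smul]
      · obtain rfl : i = m := by omega
        rw [T_succ, D.x_g_succ]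

end QMat

/-- The Serre-type relations of `BorelData` imply all `q`-matrix relations for `T`, by induction on
the last column. -/
theorem qMat (hq : q ≠ 0) (hc : q - q⁻¹ ≠ 0) (h2 : 1 + q ^ 2 ≠ 0) (m : ℕ) : D.QMat m := by
  induction m with
  | zero =>
    refine ⟨fun i j l h1 h2 => by omega, fun i h l h1 h2 => ?_, fun i j l p h1 h2 h3 => by omega,
      fun i j l p h1 h2 h3 => by omega⟩
    simp [D.T_zero (by omega : l < h)]
  | succ m Q =>
    refine ⟨fun i j l h1 h3 => ?_, fun i h l h1 h3 => ?_, fun i j l p h1 h3 h4 => ?_,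
      fun i j l p h1 h3 h4 => ?_⟩
    · rcases Nat.lt_or_ge m l with h | h
      · obtain rfl : l = m + 1 := by omega
        exact Q.row_succ hc h2 (by omega)
      · exact Q.row i j l h1 h
    · rcases Nat.lt_or_ge m l with h | h
      · obtain rfl : l = m + 1 := by omega
        exact Q.col_succ hq hc h2 h1
      · exact Q.col _ _ l h1 h
    · rcases Nat.lt_or_ge m p with h | h
      · obtain rfl : p = m + 1 := by omega
        exact Q.cross_succ hq hc h2 h1 (by omega)
      · exact Q.cross i j l p h1 h3 h
    · rcases Nat.lt_or_ge m p with h | h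
      · obtain rfl : p = m + 1 := by omega
        exact Q.mix_succ hq hc h2 h1 (by omega)
      · exact Q.mix i j l p h1 h3 h

end BorelData

/-! ### Structure and universal property of the quantum function algebra -/

theorem left_eq_of_inverse {A : Type} [Ring A] {u a b : A} (h1 : a * u = 1) (h2 : u * b = 1) :
    a = b := left_inv_eq_right_inv h1 h2

theorem list_prod_inverse {A : Type} [Ring A] {ι : Type} (f h : ι → A)
    (hf : ∀ i, f i * h i = 1) (l : List ι) :
    (l.map f).prod * ((l.map h).reverse).prod = 1 := by
  induction l with
  | nil => simp
  | cons a l ih =>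
    simp only [List.map_cons, List.prod_cons, List.reverse_cons, List.prod_append, List.prod_nil,
      mul_one]
    rw [mul_assoc, ← mul_assoc _ _ (h a), ih, one_mul, hf]

theorem list_prod_inverse' {A : Type} [Ring A] {ι : Type} (f h : ι → A)
    (hf : ∀ i, h i * f i = 1) (l : List ι) :
    ((l.map h).reverse).prod * (l.map f).prod = 1 := by
  induction l with
  | nil => simp
  | cons a l ih =>
    simp only [List.map_cons, List.prod_cons, List.reverse_cons, List.prod_append, List.prod_nil,
      mul_one]
    rw [mul_assoc, ← mul_assoc (h a), hf, one_mul, ih]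

/-- A factor of an invertible product of commuting elements is invertible. -/
theorem isUnit_of_list_prod {A : Type} [Ring A] {ι : Type} (f : ι → A)
    (hf : ∀ i j, f i * f j = f j * f i) (l : List ι) (h : IsUnit (l.map f).prod) :
    ∀ i ∈ l, IsUnit (f i) := by
  induction l with
  | nil => simp
  | cons a l ih =>
    rw [List.map_cons, List.prod_cons, Commute.isUnit_mul_iff] at h
    · intro i hi
      rcases List.mem_cons.1 hi with rfl | hi
      · exact h.1
      · exact ih h.2 i hi
    · refine Commute.list_prod_right _ _ fun b hb => ?_
      obtain ⟨i, _, rfl⟩ := List.mem_map.1 hb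
      exact hf a i

namespace FqBp

variable {K : Type} [Field K] {q : K} {n : ℕ}

theorem rel {a b : FreeAlgebra K (BpGen n)} (h : BpRel K q n a b) :
    (RingQuot.mkAlgHom K (BpRel K q n) a : FqBp K q n) = RingQuot.mkAlgHom K (BpRel K q n) b :=
  RingQuot.mkAlgHom_rel K h

theorem row (i j l : Fin n) (h : j < l) :
    bT K q n i j * bT K q n i l = q • (bT K q n i l * bT K q n i j) := by
  have := rel (BpRel.row (q := q) i j l h)
  rw [map_mul, map_smul, map_mul] at this
  exact this

theorem col (i h l : Fin n) (hlt : i < h) :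
    bT K q n i l * bT K q n h l = q • (bT K q n h l * bT K q n i l) := by
  have := rel (BpRel.col (q := q) i h l hlt)
  rw [map_mul, map_smul, map_mul] at this
  exact this

theorem cross (i j l m : Fin n) (h1 : i < j) (h2 : l < m) :
    bT K q n i m * bT K q n j l = bT K q n j l * bT K q n i m := by
  have := rel (BpRel.cross (q := q) i j l m h1 h2)
  rw [map_mul, map_mul] at this
  exact this

theorem mix (i j l m : Fin n) (h1 : i < j) (h2 : l < m) :
    bT K q n i l * bT K q n j m - bT K q n j m * bT K q n i l =
      (q - q⁻¹) • (bT K q n i m * bT K q n j l) := by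
  have := rel (BpRel.mix (q := q) i j l m h1 h2)
  rw [map_sub, map_smul, map_mul, map_mul, map_mul] at this
  exact this

theorem tri (i j : Fin n) (h : j < i) : bT K q n i j = 0 := by
  have := rel (BpRel.tri (q := q) i j h)
  rw [map_zero] at this
  exact this

theorem det_dinv :
    ((List.finRange n).map (fun i => bT K q n i i)).prod * bDinv K q n = 1 := by
  have := rel (BpRel.detinv1 (K := K) (q := q) (n := n))
  rw [map_mul, map_one, map_list_prod, List.map_map] at this
  exact this

theorem dinv_det :
    bDinv K q n * ((List.finRange n).map (fun i => bT K q n i i)).prod = 1 := by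
  have := rel (BpRel.detinv2 (K := K) (q := q) (n := n))
  rw [map_mul, map_one, map_list_prod, List.map_map] at this
  exact this

variable (K q n) in
/-- The entries of the generic upper triangular `q`-matrix, indexed by `ℕ` and extended by the
identity matrix outside the range of `Fin n`. -/
def t (i j : ℕ) : FqBp K q n :=
  if h : i < n ∧ j < n then bT K q n ⟨i, h.1⟩ ⟨j, h.2⟩ else if i = j then 1 else 0

theorem t_val (i j : Fin n) : t K q n i j = bT K q n i j := by
  simp [t]

theorem t_in {i j : ℕ} (hi : i < n) (hj : j < n) : t K q n i j = bT K q n ⟨i, hi⟩ ⟨j, hj⟩ := by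
  simp [t, hi, hj]

theorem t_out {i j : ℕ} (h : ¬ (i < n ∧ j < n)) : t K q n i j = if i = j then 1 else 0 := by
  rw [t, dif_neg h]

theorem t_zero {i j : ℕ} (h : j < i) : t K q n i j = 0 := by
  by_cases h' : i < n ∧ j < n
  · rw [t_in h'.1 h'.2]; exact tri _ _ h
  · rw [t_out h', if_neg (by omega)]

theorem t_row (i j l : ℕ) (h : j < l) :
    t K q n i j * t K q n i l = q • (t K q n i l * t K q n i j) := by
  by_cases h' : i < n ∧ l < n
  · rw [t_in h'.1 h'.2, t_in h'.1 (by omega)]; exact row _ _ _ h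
  · rw [t_out h']
    split_ifs with hi
    · rw [t_out (by omega), if_neg (by omega)]; simp
    · simp

theorem t_col (i h l : ℕ) (hlt : i < h) :
    t K q n i l * t K q n h l = q • (t K q n h l * t K q n i l) := by
  by_cases h' : h < n ∧ l < n
  · rw [t_in h'.1 h'.2, t_in (by omega) h'.2]; exact col _ _ _ hlt
  · rw [t_out h']
    split_ifs with hi
    · rw [t_out (by omega), if_neg (by omega)]; simp
    · simp

/-- Entries out of range are `0` or `1`. -/
theorem t_central {i j : ℕ} (h : ¬ (i < n ∧ j < n)) (y : FqBp K q n) :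
    t K q n i j * y = y * t K q n i j := by
  rw [t_out h]; split_ifs <;> simp

theorem t_cross (i j l m : ℕ) (h1 : i < j) (h2 : l < m) :
    t K q n i m * t K q n j l = t K q n j l * t K q n i m := by
  by_cases h : i < n ∧ m < n
  · by_cases h' : j < n ∧ l < n
    · rw [t_in h.1 h.2, t_in h'.1 h'.2]; exact cross _ _ _ _ h1 h2
    · rw [t_central h']
  · rw [t_central h]

theorem t_mix (i j l m : ℕ) (h1 : i < j) (h2 : l < m) :
    t K q n i l * t K q n j m - t K q n j m * t K q n i l =
      (q - q⁻¹) • (t K q n i m * t K q n j l) := by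
  by_cases h : j < n ∧ m < n
  · rw [t_in h.1 h.2, t_in (by omega) (by omega), t_in (by omega) h.2, t_in h.1 (by omega)]
    exact mix _ _ _ _ h1 h2
  · have h0 : t K q n i m * t K q n j l = 0 := by
      rcases lt_or_ge l j with hl | hl
      · rw [t_zero hl, mul_zero]
      · rw [t_out (by omega : ¬ (i < n ∧ m < n)), if_neg (by omega), zero_mul]
    rw [h0, t_central h]; simp

theorem t_diag_comm (i j : ℕ) : t K q n i i * t K q n j j = t K q n j j * t K q n i i := by
  rcases lt_trichotomy i j with h | rfl | h
  · have := t_mix (K := K) (q := q) (n := n) i j i j h h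
    rw [t_zero h, mul_zero, smul_zero, sub_eq_zero] at this
    exact this
  · rfl
  · have := t_mix (K := K) (q := q) (n := n) j i j i h h
    rw [t_zero h, mul_zero, smul_zero, sub_eq_zero] at this
    exact this.symm

/-- The diagonal entries commute, so the invertibility of their product makes each of them a unit. -/
theorem isUnit_t (i : ℕ) : IsUnit (t K q n i i) := by
  by_cases h : i < n
  · have hu : IsUnit ((List.finRange n).map (fun i : Fin n => t K q n i i)).prod := by
      simp only [t_val]
      exact ⟨⟨_, _, det_dinv, dinv_det⟩, rfl⟩
    exact isUnit_of_list_prod _ (fun i j => t_diag_comm _ _) _ hu ⟨i, h⟩ (List.mem_finRange _)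
  · rw [t_out (by omega), if_pos rfl]; exact isUnit_one

variable (K q n) in
/-- The inverse of the diagonal entry `t i i`. -/
def ti (i : ℕ) : FqBp K q n := ((isUnit_t (K := K) (q := q) (n := n) i).unit⁻¹ : (FqBp K q n)ˣ)

theorem t_ti (i : ℕ) : t K q n i i * ti K q n i = 1 := (isUnit_t i).mul_val_inv

theorem ti_t (i : ℕ) : ti K q n i * t K q n i i = 1 := (isUnit_t i).val_inv_mul

variable (K q n) in
/-- The diagonal and superdiagonal entries of the generic upper triangular `q`-matrix. Their Serre
relations follow from the `q`-matrix relations on a `2 × 2` block with one entry off these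
diagonals. -/
def data : BorelData K q (FqBp K q n) where
  g i := t K q n i i
  gi := ti K q n
  x i := t K q n i (i + 1)
  g_gi := t_ti
  gi_g := ti_t
  g_g := t_diag_comm
  g_x_self i := t_row i i (i + 1) (by omega)
  x_g_succ i := t_col i (i + 1) (i + 1) (by omega)
  g_x i j h1 h2 := by
    rcases lt_or_gt_of_ne h1 with h | h
    · have := t_mix (K := K) (q := q) (n := n) i j i (j + 1) h (by omega)
      rwa [t_zero h, mul_zero, smul_zero, sub_eq_zero] at this
    · have := t_mix (K := K) (q := q) (n := n) j i (j + 1) i h (by omega)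
      rw [t_zero (by omega : j + 1 < i), mul_zero, smul_zero, sub_eq_zero] at this
      exact this.symm
  x_x i j h := by
    have := t_mix (K := K) (q := q) (n := n) i j (i + 1) (j + 1) (by omega) (by omega)
    rwa [t_zero h, mul_zero, smul_zero, sub_eq_zero] at this
  serre_left i := by
    have hy := t_mix (K := K) (q := q) (n := n) i (i + 1) (i + 1) (i + 2) (by omega) (by omega)
    have hr := t_row (K := K) (q := q) (n := n) i (i + 1) (i + 2) (by omega)
    have hg := t_col (K := K) (q := q) (n := n) i (i + 1) (i + 1) (by omega)
    have e1 := congrArg (t K q n i (i + 1) * ·) hy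
    have e2 := congrArg (· * t K q n i (i + 1)) hy
    simp only [mul_add, add_mul, mul_sub, sub_mul, smul_mul_assoc, mul_smul_comm, smul_smul,
      smul_add, mul_assoc, hg, hr, reas hr] at e1 e2 ⊢
    linear_combination (norm := skip) (1 : K) • e1 - (q ^ 2) • e2
    match_scalars <;> ring
  serre_right i := by
    have hy := t_mix (K := K) (q := q) (n := n) i (i + 1) (i + 1) (i + 2) (by omega) (by omega)
    have hr := t_col (K := K) (q := q) (n := n) i (i + 1) (i + 2) (by omega)
    have hg := t_row (K := K) (q := q) (n := n) (i + 1) (i + 1) (i + 2) (by omega)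
    have e1 := congrArg (t K q n (i + 1) (i + 2) * ·) hy
    have e2 := congrArg (· * t K q n (i + 1) (i + 2)) hy
    simp only [mul_add, add_mul, mul_sub, sub_mul, smul_mul_assoc, mul_smul_comm, smul_smul,
      smul_add, mul_assoc, hg, hr, reas hr] at e1 e2 ⊢
    linear_combination (norm := skip) (1 : K) • e2 - (q ^ 2) • e1
    match_scalars <;> ring

/-- The generic `q`-matrix is determined by its diagonal and superdiagonal through the recursion
defining `BorelData.T`. -/
theorem data_T (hc : q - q⁻¹ ≠ 0) (i j : ℕ) : (data K q n).T i j = t K q n i j := by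
  induction j with
  | zero =>
    rcases Nat.eq_zero_or_pos i with rfl | hi
    · rw [BorelData.T_self]; rfl
    · rw [BorelData.T_zero _ hi, t_zero hi]
  | succ m ih =>
    rcases lt_trichotomy i m with hi | rfl | hi
    · apply cancel_right (t_ti m)
      apply smul_cancel hc
      have := (data K q n).T_rec hc hi
      rw [ih] at this
      refine this.trans (t_mix i m m (m + 1) hi (by omega))
    · rw [BorelData.T_succ]; rfl
    · rcases Nat.lt_or_ge (m + 1) i with h2 | h2
      · rw [BorelData.T_zero _ h2, t_zero h2]
      · obtain rfl : i = m + 1 := by omega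
        rw [BorelData.T_self]; rfl

/-- The diagonal entries, their inverses and the superdiagonal entries generate `FqBp K q n`. -/
theorem subalgebra_eq_top (hc : q - q⁻¹ ≠ 0) (S : Subalgebra K (FqBp K q n))
    (hg : ∀ i, t K q n i i ∈ S) (hgi : ∀ i, ti K q n i ∈ S) (hx : ∀ i, t K q n i (i + 1) ∈ S) :
    S = ⊤ := by
  have hT : ∀ i j, t K q n i j ∈ S := by
    intro i j
    rw [← data_T hc]
    induction j with
    | zero => rw [BorelData.T]; split_ifs; exacts [hg 0, S.zero_mem]
    | succ m ih =>
      rw [BorelData.T]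
      split_ifs
      · exact hg _
      · exact hx _
      · exact S.smul_mem (S.mul_mem (S.sub_mem (S.mul_mem ih (hx m)) (S.mul_mem (hx m) ih))
          (hgi m)) _
      · exact S.zero_mem
  have hd : bDinv K q n ∈ S := by
    have h := list_prod_inverse (fun i : Fin n => t K q n i i) (fun i => ti K q n i)
      (fun i => t_ti _) (List.finRange n)
    simp only [t_val] at h
    rw [left_eq_of_inverse dinv_det h]
    refine Subalgebra.list_prod_mem _ fun y hy => ?_
    rw [List.mem_reverse] at hy
    obtain ⟨i, _, rfl⟩ := List.mem_map.1 hy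
    exact hgi _
  rw [eq_top_iff]
  rintro y -
  obtain ⟨w, rfl⟩ := RingQuot.mkAlgHom_surjective K (BpRel K q n) y
  induction w using FreeAlgebra.induction with
  | grade0 r => rw [AlgHom.commutes]; exact S.algebraMap_mem r
  | grade1 s =>
    cases s with
    | t i j =>
      have h := hT i j
      rw [t_val] at h
      exact h
    | dinv => exact hd
  | mul a b ha hb => rw [map_mul]; exact S.mul_mem ha hb
  | add a b ha hb => rw [map_add]; exact S.add_mem ha hb

/-- Algebra maps out of `FqBp K q n` are determined by the diagonal and superdiagonal entries; their
values on the inverses `ti` are then automatic. -/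
theorem hom_ext (hc : q - q⁻¹ ≠ 0) {A : Type} [Ring A] [Algebra K A]
    {φ ψ : FqBp K q n →ₐ[K] A} (hg : ∀ i, φ (t K q n i i) = ψ (t K q n i i))
    (hx : ∀ i, φ (t K q n i (i + 1)) = ψ (t K q n i (i + 1))) : φ = ψ := by
  have := subalgebra_eq_top hc (AlgHom.equalizer φ ψ) hg (fun i => ?_) hx
  · ext y
    have hy : y ∈ AlgHom.equalizer φ ψ := this ▸ Algebra.mem_top
    exact hy
  · rw [AlgHom.mem_equalizer]
    refine left_eq_of_inverse (u := φ (t K q n i i)) ?_ ?_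
    · rw [← map_mul, ti_t, map_one]
    · rw [hg, ← map_mul, t_ti, map_one]

section Lift

variable {A : Type} [Ring A] [Algebra K A]

/-- The algebra map out of `FqBp K q n` sending the generic `q`-matrix to `D.T`. It is well defined by
`BorelData.qMat`; the values of `D` at indices out of range play no role. -/
def lift (hq : q ≠ 0) (hc : q - q⁻¹ ≠ 0) (h2 : 1 + q ^ 2 ≠ 0) (n : ℕ) (D : BorelData K q A) :
    FqBp K q n →ₐ[K] A :=
  RingQuot.liftAlgHom K ⟨FreeAlgebra.lift K (fun
    | .t i j => D.T i j
    | .dinv => (((List.finRange n).map (fun i : Fin n => D.gi i)).reverse).prod), by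
      have Q := D.qMat hq hc h2 n
      intro a b h
      induction h with
      | row i j l h => simpa [bt] using Q.row _ _ _ h l.2.le
      | col i h l hlt => simpa [bt] using Q.col _ _ _ hlt l.2.le
      | cross i j l m h1 h2 => simpa [bt] using Q.cross _ _ _ _ h1 h2 m.2.le
      | mix i j l m h1 h2 => simpa [bt] using Q.mix _ _ _ _ h1 h2 m.2.le
      | tri i j h => simpa [bt] using D.T_zero h
      | detinv1 =>
        rw [map_mul, map_list_prod, List.map_map]
        simp only [Function.comp_def, bt, bdinv, FreeAlgebra.lift_ι_apply, D.T_self, map_one]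
        exact list_prod_inverse _ _ (fun i => D.g_gi _) _
      | detinv2 =>
        rw [map_mul, map_list_prod, List.map_map]
        simp only [Function.comp_def, bt, bdinv, FreeAlgebra.lift_ι_apply, D.T_self, map_one]
        exact list_prod_inverse' _ _ (fun i => D.gi_g _) _⟩

variable (hq : q ≠ 0) (hc : q - q⁻¹ ≠ 0) (h2 : 1 + q ^ 2 ≠ 0) (D : BorelData K q A)

theorem lift_bT (i j : Fin n) : lift hq hc h2 n D (bT K q n i j) = D.T i j := by
  refine (RingQuot.liftAlgHom_mkAlgHom_apply _ _ _ _).trans ?_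
  rw [bt, FreeAlgebra.lift_ι_apply]

theorem lift_g {i : ℕ} (hi : i < n) : lift hq hc h2 n D (t K q n i i) = D.g i := by
  rw [t_in hi hi, lift_bT, D.T_self]

theorem lift_x {i : ℕ} (hi : i + 1 < n) : lift hq hc h2 n D (t K q n i (i + 1)) = D.x i := by
  rw [t_in (by omega) hi, lift_bT, D.T_succ]

end Lift

end FqBp

/-! ### Chevalley generators versus diagonal and superdiagonal entries -/

section Transfer

variable {K : Type} [Field K] {A : Type} [Ring A] [Algebra K A]

/-- A skew commutation relation with `g` inverts to one with the inverse of `g`. -/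
theorem inv_skew {g gi y : A} {r : K} (hr : r ≠ 0) (h1 : g * gi = 1) (h2 : gi * g = 1)
    (h : g * y = r • (y * g)) : gi * y = r⁻¹ • (y * gi) := by
  have : gi * (g * y) * gi = r • (gi * y) := by
    rw [h]; simp [mul_assoc, h1]
  rw [← mul_assoc gi, h2, one_mul] at this
  rw [this, smul_smul, inv_mul_cancel₀ hr, one_smul]

theorem inv_comm {g gi y : A} (h1 : g * gi = 1) (h2 : gi * g = 1)
    (h : g * y = y * g) : gi * y = y * gi := by
  calc gi * y = gi * (y * g) * gi := by rw [mul_assoc, mul_assoc, h1, mul_one]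
    _ = y * gi := by rw [← h, ← mul_assoc gi, h2, one_mul]

/-- A Serre-type relation survives multiplication of its arguments by skew commuting elements `k₂`,
`k₃`, up to powers of `r`: this converts between `x i` and the Chevalley generators
`e i = x i * gi (i + 1)`. The common scalar `s` is the normalization of the generators. -/
theorem transfer_left {r α β s : K} (hr : r ≠ 0) {v₁ v₂ k₂ k₃ : A}
    (h21 : k₂ * v₁ = r • (v₁ * k₂)) (h22 : k₂ * v₂ = r⁻¹ • (v₂ * k₂))
    (h31 : k₃ * v₁ = v₁ * k₃) (h33 : k₃ * k₂ = k₂ * k₃)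
    (hS : v₁ * v₁ * v₂ + α • (v₂ * v₁ * v₁) = β • (v₁ * v₂ * v₁)) :
    r • ((s • (v₁ * k₂)) * (s • (v₁ * k₂)) * (s • (v₂ * k₃))) +
      (α * r⁻¹) • ((s • (v₂ * k₃)) * (s • (v₁ * k₂)) * (s • (v₁ * k₂))) =
      β • ((s • (v₁ * k₂)) * (s • (v₂ * k₃)) * (s • (v₁ * k₂))) := by
  have e := congrArg (· * (k₂ * (k₂ * k₃))) hS
  simp only [add_mul, smul_mul_assoc, mul_smul_comm, smul_smul, mul_assoc, h21, reas h21, h22,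
    reas h22, h31, reas h31, h33, reas h33] at e ⊢
  linear_combination (norm := skip) (s ^ 3) • e
  match_scalars <;> field_simp <;> ring

/-- The companion of `transfer_left` for the Serre relation of degree two in the second element. -/
theorem transfer_right {r α β s : K} (hr : r ≠ 0) {v₁ v₂ k₂ k₃ : A}
    (h22 : k₂ * v₂ = r⁻¹ • (v₂ * k₂)) (h32 : k₃ * v₂ = r • (v₂ * k₃))
    (h31 : k₃ * v₁ = v₁ * k₃) (h33 : k₃ * k₂ = k₂ * k₃)
    (hS : v₁ * v₂ * v₂ + α • (v₂ * v₂ * v₁) = β • (v₂ * v₁ * v₂)) :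
    r • ((s • (v₁ * k₂)) * (s • (v₂ * k₃)) * (s • (v₂ * k₃))) +
      (α * r⁻¹) • ((s • (v₂ * k₃)) * (s • (v₂ * k₃)) * (s • (v₁ * k₂))) =
      β • ((s • (v₂ * k₃)) * (s • (v₁ * k₂)) * (s • (v₂ * k₃))) := by
  have e := congrArg (· * (k₂ * (k₃ * k₃))) hS
  simp only [add_mul, smul_mul_assoc, mul_smul_comm, smul_smul, mul_assoc, h22,
    reas h22, h31, reas h31, h32, reas h32, h33, reas h33] at e ⊢
  linear_combination (norm := skip) (s ^ 3) • e
  match_scalars <;> field_simp <;> ring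

end Transfer

/-- The relations among the Chevalley generators `G_i = g i`, `G_i⁻¹ = gi i`, `E_i = e i` of the
positive quantum Borel algebra, with indices in `ℕ`. -/
structure ChevData (K : Type) [Field K] (q : K) (A : Type) [Ring A] [Algebra K A] where
  g : ℕ → A
  gi : ℕ → A
  e : ℕ → A
  g_gi : ∀ i, g i * gi i = 1
  gi_g : ∀ i, gi i * g i = 1
  g_g : ∀ i j, g i * g j = g j * g i
  g_e_self : ∀ i, g i * e i = q • (e i * g i)
  g_e_succ : ∀ i, g (i + 1) * e i = q⁻¹ • (e i * g (i + 1))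
  g_e : ∀ i j, i ≠ j → i ≠ j + 1 → g i * e j = e j * g i
  e_e : ∀ i j, i + 1 < j → e i * e j = e j * e i
  serre_left : ∀ i, e i * e i * e (i + 1) + e (i + 1) * (e i * e i) =
    (q + q⁻¹) • (e i * e (i + 1) * e i)
  serre_right : ∀ i, e (i + 1) * e (i + 1) * e i + e i * (e (i + 1) * e (i + 1)) =
    (q + q⁻¹) • (e (i + 1) * e i * e (i + 1))

namespace ChevData

variable {K : Type} [Field K] {q : K} {A : Type} [Ring A] [Algebra K A]

/-- The substitution `x i = -(q - q⁻¹) • (e i * g (i + 1))`. -/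
def toBorel (hq : q ≠ 0) (D : ChevData K q A) : BorelData K q A where
  g := D.g
  gi := D.gi
  x i := (-(q - q⁻¹)) • (D.e i * D.g (i + 1))
  g_gi := D.g_gi
  gi_g := D.gi_g
  g_g := D.g_g
  g_x_self i := by
    simp only [smul_mul_assoc, mul_smul_comm, mul_assoc, smul_smul, D.g_g (i + 1) i,
      reas (D.g_e_self i), mul_comm q]
  x_g_succ i := by
    simp only [smul_mul_assoc, mul_smul_comm, mul_assoc, smul_smul,
      reas (D.g_e_succ i)]
    congr 1; field_simp
  g_x i j h1 h2 := by
    simp only [smul_mul_assoc, mul_smul_comm, mul_assoc, smul_smul, D.g_g (j + 1) i,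
      reas (D.g_e i j h1 h2)]
  x_x i j h := by
    simp only [smul_mul_assoc, mul_smul_comm, mul_assoc, smul_smul, D.g_g (j + 1) (i + 1),
      reas (D.g_e (i + 1) j (by omega) (by omega)), reas (D.g_e (j + 1) i (by omega) (by omega)),
      reas (D.e_e i j h)]
  serre_left i := by
    have := transfer_left (r := q⁻¹) (α := 1) (s := -(q - q⁻¹)) (inv_ne_zero hq)
      (D.g_e_succ i) (by rw [inv_inv]; exact D.g_e_self (i + 1))
      (D.g_e (i + 1 + 1) i (by omega) (by omega)) (D.g_g (i + 1 + 1) (i + 1))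
      (by simpa [mul_assoc] using D.serre_left i)
    linear_combination (norm := skip) q • this
    match_scalars <;> field_simp <;> ring
  serre_right i := by
    have := transfer_right (r := q⁻¹) (α := 1) (s := -(q - q⁻¹)) (inv_ne_zero hq)
      (by rw [inv_inv]; exact D.g_e_self (i + 1)) (D.g_e_succ (i + 1))
      (D.g_e (i + 1 + 1) i (by omega) (by omega)) (D.g_g (i + 1 + 1) (i + 1))
      (by rw [one_smul, add_comm]; simpa [mul_assoc] using D.serre_right i)
    linear_combination (norm := skip) q • this
    match_scalars <;> field_simp <;> ring

end ChevData

namespace BorelData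

variable {K : Type} [Field K] {q : K} {A : Type} [Ring A] [Algebra K A]

theorem gi_gi (D : BorelData K q A) (i j : ℕ) : D.gi i * D.gi j = D.gi j * D.gi i :=
  inv_comm (D.g_gi i) (D.gi_g i)
    (inv_comm (D.g_gi j) (D.gi_g j) (D.g_g j i)).symm

theorem g_gi_comm (D : BorelData K q A) (i j : ℕ) : D.g i * D.gi j = D.gi j * D.g i :=
    (inv_comm (D.g_gi j) (D.gi_g j) (D.g_g j i)).symm

/-- The inverse substitution `e i = -(q - q⁻¹)⁻¹ • (x i * gi (i + 1))`. -/
def toChev (hq : q ≠ 0) (D : BorelData K q A) : ChevData K q A :=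
  have hs : ∀ i, D.gi (i + 1) * D.x i = q • (D.x i * D.gi (i + 1)) := fun i => by
    have := inv_skew (r := q⁻¹) (y := D.x i) (inv_ne_zero hq) (D.g_gi (i + 1)) (D.gi_g (i + 1))
      (by rw [D.x_g_succ, smul_smul, inv_mul_cancel₀ hq, one_smul])
    rwa [inv_inv] at this
  have h0 : ∀ i, D.gi i * D.x i = q⁻¹ • (D.x i * D.gi i) := fun i =>
    inv_skew hq (D.g_gi i) (D.gi_g i) (D.g_x_self i)
  have hgi : ∀ i j, i ≠ j → i ≠ j + 1 → D.gi i * D.x j = D.x j * D.gi i := fun i j h1 h2 =>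
    inv_comm (D.g_gi i) (D.gi_g i) (D.g_x i j h1 h2)
  { g := D.g
    gi := D.gi
    e := fun i => (-(q - q⁻¹)⁻¹) • (D.x i * D.gi (i + 1))
    g_gi := D.g_gi
    gi_g := D.gi_g
    g_g := D.g_g
    g_e_self := fun i => by
      simp only [smul_mul_assoc, mul_smul_comm, mul_assoc, smul_smul,
        ← D.g_gi_comm i (i + 1), reas (D.g_x_self i), mul_comm q]
    g_e_succ := fun i => by
      have h : D.g (i + 1) * D.x i = q⁻¹ • (D.x i * D.g (i + 1)) := by
        rw [D.x_g_succ, smul_smul, inv_mul_cancel₀ hq, one_smul]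
      rw [mul_smul_comm, reas h, smul_mul_assoc, smul_mul_assoc, mul_assoc, mul_assoc, D.g_gi,
        D.gi_g, smul_comm]
    g_e := fun i j h1 h2 => by
      simp only [smul_mul_assoc, mul_smul_comm, mul_assoc, smul_smul, ← D.g_gi_comm i (j + 1),
        reas (D.g_x i j h1 h2)]
    e_e := fun i j h => by
      simp only [smul_mul_assoc, mul_smul_comm, mul_assoc, smul_smul, D.gi_gi (j + 1) (i + 1),
        reas (hgi (i + 1) j (by omega) (by omega)), reas (hgi (j + 1) i (by omega) (by omega)),
        reas (D.x_x i j h)]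
    serre_left := fun i => by
      have := transfer_left (r := q) (s := -(q - q⁻¹)⁻¹) hq (hs i) (h0 (i + 1))
        (hgi (i + 1 + 1) i (by omega) (by omega)) (D.gi_gi (i + 1 + 1) (i + 1)) (D.serre_left i)
      rw [← mul_assoc (_ • _)]
      linear_combination (norm := skip) q⁻¹ • this
      match_scalars <;> field_simp <;> ring
    serre_right := fun i => by
      have := transfer_right (r := q) (s := -(q - q⁻¹)⁻¹) hq (h0 (i + 1)) (hs (i + 1))
        (hgi (i + 1 + 1) i (by omega) (by omega)) (D.gi_gi (i + 1 + 1) (i + 1)) (D.serre_right i)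
      rw [← mul_assoc ((-(q - q⁻¹)⁻¹) • (D.x i * _))]
      linear_combination (norm := skip) q⁻¹ • this
      match_scalars <;> field_simp <;> ring }

end BorelData

/-! ### Skew derivations as upper triangular matrices -/

section UT

variable {K : Type} [Field K] {A : Type} [Ring A] [Algebra K A]

/-- The upper triangular `2 × 2` matrix with diagonal `a`, `c` and corner `b`. -/
def UT (a b c : A) : Matrix (Fin 2) (Fin 2) A := !![a, b; 0, c]

theorem UT_mul (a b c a' b' c' : A) :
    UT a b c * UT a' b' c' = UT (a * a') (a * b' + b * c') (c * c') := by
  simp [UT, Matrix.mul_fin_two]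

theorem UT_add (a b c a' b' c' : A) : UT a b c + UT a' b' c' = UT (a + a') (b + b') (c + c') := by
  ext i j; fin_cases i <;> fin_cases j <;> simp [UT]

theorem UT_smul (r : K) (a b c : A) : r • UT a b c = UT (r • a) (r • b) (r • c) := by
  ext i j; fin_cases i <;> fin_cases j <;> simp [UT]

theorem UT_one : (1 : Matrix (Fin 2) (Fin 2) A) = UT 1 0 1 := by
  simp [UT, Matrix.one_fin_two]

theorem UT_congr {a b c a' b' c' : A} (h1 : a = a') (h2 : b = b') (h3 : c = c') :
    UT a b c = UT a' b' c' := by rw [h1, h2, h3]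

/-- A `q`-Serre relation for triangular matrices reduces to that of the diagonal entries and its
skew linearization, the hypothesis `h`. -/
theorem ut_serre_left {α β sb sx : K} {b x db dx : A}
    (hS : b * b * x + α • (x * b * b) = β • (b * x * b))
    (h : db * b * x + sb • (b * db * x) + (sb * sb) • (b * b * dx) +
      α • (dx * b * b + sx • (x * db * b) + (sx * sb) • (x * b * db)) =
      β • (db * x * b + sb • (b * dx * b) + (sb * sx) • (b * x * db))) :
    UT (sb • b) db b * UT (sb • b) db b * UT (sx • x) dx x +
      α • (UT (sx • x) dx x * UT (sb • b) db b * UT (sb • b) db b) =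
      β • (UT (sb • b) db b * UT (sx • x) dx x * UT (sb • b) db b) := by
  simp only [UT_mul, UT_smul, UT_add]
  refine UT_congr ?_ ?_ hS
  · simp only [smul_mul_assoc, mul_smul_comm, smul_smul]
    linear_combination (norm := skip) (sb * sb * sx) • hS
    match_scalars <;> ring
  · simp only [smul_mul_assoc, mul_smul_comm, smul_smul, mul_add, add_mul]
    simp only [mul_assoc] at h ⊢
    linear_combination (norm := skip) (1 : K) • h
    match_scalars <;> ring

/-- The companion of `ut_serre_left` for the relation of degree two in `x`. -/
theorem ut_serre_right {α β sa sx : K} {a x da dx : A}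
    (hS : a * x * x + α • (x * x * a) = β • (x * a * x))
    (h : da * x * x + sa • (a * dx * x) + (sa * sx) • (a * x * dx) +
      α • (dx * x * a + sx • (x * dx * a) + (sx * sx) • (x * x * da)) =
      β • (dx * a * x + sx • (x * da * x) + (sx * sa) • (x * a * dx))) :
    UT (sa • a) da a * UT (sx • x) dx x * UT (sx • x) dx x +
      α • (UT (sx • x) dx x * UT (sx • x) dx x * UT (sa • a) da a) =
      β • (UT (sx • x) dx x * UT (sa • a) da a * UT (sx • x) dx x) := by
  simp only [UT_mul, UT_smul, UT_add]
  refine UT_congr ?_ ?_ hS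
  · simp only [smul_mul_assoc, mul_smul_comm, smul_smul]
    linear_combination (norm := skip) (sa * sx * sx) • hS
    match_scalars <;> ring
  · simp only [smul_mul_assoc, mul_smul_comm, smul_smul, mul_add, add_mul]
    simp only [mul_assoc] at h ⊢
    linear_combination (norm := skip) (1 : K) • h
    match_scalars <;> ring

end UT

namespace BorelData

variable {K : Type} [Field K] {q : K} {A : Type} [Ring A] [Algebra K A]

/-- The scalar `q^{δ_{ij} - δ_{i,j+1}}` by which the automorphism attached to `F_j` multiplies `G_i`. -/
def twist (q : K) (j i : ℕ) : K := if i = j then q else if i = j + 1 then q⁻¹ else 1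

theorem twist_self (q : K) (j : ℕ) : twist q j j = q := by simp [twist]
theorem twist_succ (q : K) (j : ℕ) : twist q j (j + 1) = q⁻¹ := by simp [twist]
theorem twist_of_ne (q : K) {i j : ℕ} (h1 : i ≠ j) (h2 : i ≠ j + 1) : twist q j i = 1 := by
  simp [twist, h1, h2]
theorem twist_ne_zero (hq : q ≠ 0) (j i : ℕ) : twist q j i ≠ 0 := by
  unfold twist; split_ifs <;> simp [hq]

variable (D : BorelData K q A)

/-- The value on `x j` of the skew derivation attached to `F_j`. It is chosen so that `F_j` and `E_j`
have the commutator prescribed in `U_q(gl_n)`. -/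
def bracket (j : ℕ) : A := D.g j - D.gi j * D.g (j + 1) * D.g (j + 1)

theorem g_bracket (i j : ℕ) : D.g i * D.bracket j = D.bracket j * D.g i := by
  simp only [bracket, mul_sub, sub_mul, mul_assoc, D.g_g i j, reas (D.g_gi_comm i j),
    reas (D.g_g i (j + 1)), D.g_g i (j + 1)]

theorem bracket_x {i j : ℕ} (h1 : i ≠ j) (h2 : i + 1 ≠ j) (h3 : i ≠ j + 1) :
    D.bracket j * D.x i = D.x i * D.bracket j := by
  have e1 := D.g_x j i h1.symm h2.symm
  have e2 := D.g_x (j + 1) i h3.symm (by omega)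
  simp only [bracket, mul_sub, sub_mul, mul_assoc, e1, e2, reas e2,
    reas (inv_comm (D.g_gi j) (D.gi_g j) e1)]

theorem g_succ_x (hq : q ≠ 0) (i : ℕ) : D.g (i + 1) * D.x i = q⁻¹ • (D.x i * D.g (i + 1)) := by
  rw [D.x_g_succ, smul_smul, inv_mul_cancel₀ hq, one_smul]

theorem gi_x_self (hq : q ≠ 0) (i : ℕ) : D.gi i * D.x i = q⁻¹ • (D.x i * D.gi i) :=
  inv_skew hq (D.g_gi i) (D.gi_g i) (D.g_x_self i)

theorem gi_succ_x (hq : q ≠ 0) (i : ℕ) : D.gi (i + 1) * D.x i = q • (D.x i * D.gi (i + 1)) := by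
  have := inv_skew (r := q⁻¹) (y := D.x i) (inv_ne_zero hq) (D.g_gi (i + 1)) (D.gi_g (i + 1))
    (D.g_succ_x hq i)
  rwa [inv_inv] at this

theorem gi_x (i j : ℕ) (h1 : i ≠ j) (h2 : i ≠ j + 1) : D.gi i * D.x j = D.x j * D.gi i :=
  inv_comm (D.g_gi i) (D.gi_g i) (D.g_x i j h1 h2)

/-- The triangular matrices encoding the skew derivation `f` attached to `F_j`: an element `a` is sent
to the matrix with diagonal `σ a`, `a` and corner `f a`, where `σ` scales `g i` by `twist q j i`
and `x i` by `twist q j (i + 1)`. Since `f (a * b) = σ a * f b + f a * b` says exactly that this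
assignment is multiplicative, checking the relations on these matrices is checking that `f` is well
defined. -/
def skew (hq : q ≠ 0) (j : ℕ) : BorelData K q (Matrix (Fin 2) (Fin 2) A) where
  g i := UT (twist q j i • D.g i) 0 (D.g i)
  gi i := UT ((twist q j i)⁻¹ • D.gi i) 0 (D.gi i)
  x i := UT (twist q j (i + 1) • D.x i) (if i = j then D.bracket j else 0) (D.x i)
  g_gi i := by
    rw [UT_mul, UT_one]
    refine UT_congr ?_ (by simp) (D.g_gi i)
    rw [smul_mul_smul_comm, mul_inv_cancel₀ (twist_ne_zero hq j i), one_smul, D.g_gi]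
  gi_g i := by
    rw [UT_mul, UT_one]
    refine UT_congr ?_ (by simp) (D.gi_g i)
    rw [smul_mul_smul_comm, inv_mul_cancel₀ (twist_ne_zero hq j i), one_smul, D.gi_g]
  g_g i l := by
    rw [UT_mul, UT_mul]
    refine UT_congr ?_ (by simp) (D.g_g i l)
    rw [smul_mul_smul_comm, smul_mul_smul_comm, D.g_g i l, mul_comm]
  g_x_self i := by
    rw [UT_mul, UT_mul, UT_smul]
    refine UT_congr ?_ ?_ (D.g_x_self i)
    · rw [smul_mul_smul_comm, smul_mul_smul_comm, D.g_x_self i, mul_comm, smul_comm]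
    · split_ifs with h
      · subst h; simp [twist_self, g_bracket]
      · simp
  x_g_succ i := by
    rw [UT_mul, UT_mul, UT_smul]
    refine UT_congr ?_ ?_ (D.x_g_succ i)
    · rw [smul_mul_smul_comm, smul_mul_smul_comm, D.x_g_succ i, smul_comm]
    · split_ifs with h
      · subst h; simp [twist_succ, g_bracket, smul_smul, hq]
      · simp
  g_x i l h1 h2 := by
    rw [UT_mul, UT_mul]
    refine UT_congr ?_ ?_ (D.g_x i l h1 h2)
    · rw [smul_mul_smul_comm, smul_mul_smul_comm, D.g_x i l h1 h2, mul_comm]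
    · split_ifs with h
      · subst h; simp [twist_of_ne q h1 h2, g_bracket]
      · simp
  x_x i l h := by
    rw [UT_mul, UT_mul]
    refine UT_congr ?_ ?_ (D.x_x i l h)
    · rw [smul_mul_smul_comm, smul_mul_smul_comm, D.x_x i l h, mul_comm]
    · by_cases h1 : i = j
      · subst h1
        have h2 : l ≠ i := by omega
        have ht : twist q i (l + 1) = 1 := twist_of_ne q (by omega) (by omega)
        have hb := D.bracket_x (i := l) (j := i) (by omega) (by omega) (by omega)
        simp [h2, ht, hb]
      · by_cases h2 : l = j
        · subst h2
          have ht : twist q l (i + 1) = 1 := twist_of_ne q (by omega) (by omega)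
          have hb := D.bracket_x (i := i) (j := l) (by omega) (by omega) (by omega)
          simp [h1, ht, hb]
        · simp [h1, h2]
  serre_left i := by
    apply ut_serre_left (D.serre_left i)
    by_cases h1 : i = j
    · subst h1
      have e1 := D.g_x i (i + 1) (by omega) (by omega)
      have e2 := D.gi_x i (i + 1) (by omega) (by omega)
      rw [if_pos rfl, if_neg (by omega), twist_succ, twist_of_ne q (by omega) (by omega)]
      simp only [bracket, mul_zero, zero_mul, smul_zero, add_zero, zero_add, mul_sub, sub_mul, smul_mul_assoc, mul_smul_comm, smul_smul, smul_sub,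
        mul_assoc, e1, reas e1, e2, reas e2, D.g_x_self, reas (D.g_x_self i),
        reas (D.g_x_self (i + 1)), D.g_succ_x hq, reas (D.g_succ_x hq i), D.gi_x_self hq,
        reas (D.gi_x_self hq i)]
      match_scalars <;> field_simp <;> ring
    · by_cases h2 : i + 1 = j
      · subst h2
        have e1 := D.g_x (i + 1 + 1) i (by omega) (by omega)
        rw [if_neg (by omega), if_pos rfl, twist_succ, twist_self]
        simp only [bracket, mul_zero, zero_mul, smul_zero, add_zero, zero_add, mul_sub, sub_mul, smul_mul_assoc, mul_smul_comm, smul_smul, smul_sub,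
          mul_assoc, e1, reas e1, D.g_succ_x hq, reas (D.g_succ_x hq i), D.gi_succ_x hq,
          reas (D.gi_succ_x hq i)]
        match_scalars <;> field_simp <;> ring
      · simp [h1, h2]
  serre_right i := by
    apply ut_serre_right (D.serre_right i)
    by_cases h1 : i = j
    · subst h1
      have e1 := D.g_x i (i + 1) (by omega) (by omega)
      have e2 := D.gi_x i (i + 1) (by omega) (by omega)
      rw [if_pos rfl, if_neg (by omega), twist_succ, twist_of_ne q (by omega) (by omega)]
      simp only [bracket, mul_zero, zero_mul, smul_zero, add_zero, zero_add, mul_sub, sub_mul, smul_mul_assoc, mul_smul_comm, smul_smul, smul_sub,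
        mul_assoc, e1, reas e1, e2, reas e2, D.g_x_self, reas (D.g_x_self (i + 1))]
      match_scalars <;> field_simp <;> ring
    · by_cases h2 : i + 1 = j
      · subst h2
        have e1 := D.g_x (i + 1 + 1) i (by omega) (by omega)
        rw [if_neg (by omega), if_pos rfl, twist_succ, twist_self]
        simp only [bracket, mul_zero, zero_mul, smul_zero, add_zero, zero_add, mul_sub, sub_mul, smul_mul_assoc, mul_smul_comm, smul_smul, smul_sub,
          mul_assoc, e1, reas e1, D.g_succ_x hq, reas (D.g_succ_x hq i),
          reas (D.g_succ_x hq (i + 1)), D.gi_succ_x hq,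
          reas (D.gi_succ_x hq i), D.g_x_self, reas (D.g_x_self (i + 1)), D.gi_x_self hq,
          reas (D.gi_x_self hq (i + 1))]
        match_scalars <;> field_simp <;> ring
      · simp [h1, h2]

end BorelData

/-! ### The skew derivations of the quantum function algebra -/

namespace FqBp

variable {K : Type} [Field K] {q : K} {n : ℕ}

theorem ti_out {i : ℕ} (hi : n ≤ i) : ti K q n i = 1 := by
  have h := ti_t (K := K) (q := q) (n := n) i
  rwa [t_out (by omega), if_pos rfl, mul_one] at h

section Skew

variable (hq : q ≠ 0) (hc : q - q⁻¹ ≠ 0) (h2 : 1 + q ^ 2 ≠ 0)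

/-- The algebra map `y ↦ (σ y, f y; 0, y)` for the skew derivation `f` attached to `F_j`. -/
def skewHom (n j : ℕ) : FqBp K q n →ₐ[K] Matrix (Fin 2) (Fin 2) (FqBp K q n) :=
  lift hq hc h2 n ((data K q n).skew hq j)

theorem skewHom_g (j : ℕ) {i : ℕ} (hi : i < n) :
    skewHom hq hc h2 n j (t K q n i i) = ((data K q n).skew hq j).g i := lift_g hq hc h2 _ hi

theorem skewHom_x (j : ℕ) {i : ℕ} (hi : i + 1 < n) :
    skewHom hq hc h2 n j (t K q n i (i + 1)) = ((data K q n).skew hq j).x i :=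
  lift_x hq hc h2 _ hi

theorem skewHom_gi (j : ℕ) {i : ℕ} (hi : i < n) :
    skewHom hq hc h2 n j (ti K q n i) = ((data K q n).skew hq j).gi i := by
  refine left_eq_of_inverse (u := skewHom hq hc h2 n j (t K q n i i)) ?_ ?_
  · rw [← map_mul, ti_t, map_one]
  · rw [skewHom_g _ _ _ _ hi, ((data K q n).skew hq j).g_gi]

/-- The lower row of `skewHom y` is `(0, y)`. -/
theorem skewHom_row (j : ℕ) (y : FqBp K q n) :
    skewHom hq hc h2 n j y 1 0 = 0 ∧ skewHom hq hc h2 n j y 1 1 = y := by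
  let S : Subalgebra K (FqBp K q n) :=
    { carrier := {y | skewHom hq hc h2 n j y 1 0 = 0 ∧ skewHom hq hc h2 n j y 1 1 = y}
      mul_mem' := by
        rintro a b ⟨ha, ha'⟩ ⟨hb, hb'⟩
        simp only [Set.mem_ofPred_eq, map_mul, Matrix.mul_apply, Fin.sum_univ_two, ha, ha', hb,
          hb']
        simp
      add_mem' := by
        rintro a b ⟨ha, ha'⟩ ⟨hb, hb'⟩
        simp [ha, ha', hb, hb']
      algebraMap_mem' := by
        intro r
        simp only [Set.mem_ofPred_eq, AlgHom.commutes, Matrix.algebraMap_matrix_apply]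
        simp }
  have hS : S = ⊤ := by
    refine subalgebra_eq_top hc S (fun i => ?_) (fun i => ?_) (fun i => ?_)
    · rcases lt_or_ge i n with hi | hi
      · change _ ∧ _
        rw [skewHom_g _ _ _ _ hi]; exact ⟨rfl, rfl⟩
      · rw [t_out (by omega), if_pos rfl]; exact S.one_mem
    · rcases lt_or_ge i n with hi | hi
      · change _ ∧ _
        rw [skewHom_gi _ _ _ _ hi]; exact ⟨rfl, rfl⟩
      · rw [ti_out hi]; exact S.one_mem
    · rcases lt_or_ge (i + 1) n with hi | hi
      · change _ ∧ _
        rw [skewHom_x _ _ _ _ hi]; exact ⟨rfl, rfl⟩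
      · rw [t_out (by omega), if_neg (by omega)]; exact S.zero_mem
  have hy : y ∈ S := hS ▸ Algebra.mem_top
  exact hy

/-- The skew derivation of `FqBp K q n` by which `F_j` acts: the corner of `skewHom`. -/
def skewDer (n j : ℕ) : Module.End K (FqBp K q n) where
  toFun y := skewHom hq hc h2 n j y 0 1
  map_add' a b := by rw [map_add]; rfl
  map_smul' r a := by rw [map_smul]; rfl

theorem skewDer_one (j : ℕ) : skewDer hq hc h2 n j 1 = 0 := by
  change skewHom hq hc h2 n j 1 0 1 = 0
  rw [map_one]; rfl

/-- The skew Leibniz rule, as an identity of operators. -/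
theorem skewDer_mul (j : ℕ) {a s d : FqBp K q n} (h : skewHom hq hc h2 n j a = UT s d a) :
    skewDer hq hc h2 n j * Algebra.lmul K _ a =
      Algebra.lmul K _ s * skewDer hq hc h2 n j + Algebra.lmul K _ d := by
  ext y
  change skewHom hq hc h2 n j (a * y) 0 1 = s * skewHom hq hc h2 n j y 0 1 + d * y
  rw [map_mul, h, Matrix.mul_apply, Fin.sum_univ_two, (skewHom_row hq hc h2 j y).2]
  rfl

local notation "Lm" => Algebra.lmul K (FqBp K q n)
local notation "der" => skewDer (n := n) hq hc h2

theorem skewDer_g (j : ℕ) {i : ℕ} (hi : i < n) :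
    der j * Lm (t K q n i i) = BorelData.twist q j i • (Lm (t K q n i i) * der j) := by
  rw [skewDer_mul hq hc h2 j (skewHom_g hq hc h2 j hi), map_smul, map_zero, add_zero,
    smul_mul_assoc]
  rfl

theorem skewDer_gi (j : ℕ) {i : ℕ} (hi : i < n) :
    der j * Lm (ti K q n i) = (BorelData.twist q j i)⁻¹ • (Lm (ti K q n i) * der j) := by
  rw [skewDer_mul hq hc h2 j (skewHom_gi hq hc h2 j hi), map_smul, map_zero, add_zero,
    smul_mul_assoc]
  rfl

/-- The Chevalley elements of `FqBp K q n`. -/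
abbrev chev (hq : q ≠ 0) (n : ℕ) : ChevData K q (FqBp K q n) := (data K q n).toChev hq

theorem chev_e (i : ℕ) :
    (chev hq n).e i = (-(q - q⁻¹)⁻¹) • (t K q n i (i + 1) * ti K q n (i + 1)) := rfl

theorem skewDer_e (j : ℕ) {i : ℕ} (hi : i + 1 < n) :
    der j * Lm ((chev hq n).e i) = Lm ((chev hq n).e i) * der j -
      (if i = j then (q - q⁻¹)⁻¹ • (Lm (t K q n i i) * Lm (ti K q n (i + 1)) -
        Lm (ti K q n i) * Lm (t K q n (i + 1) (i + 1))) else 0) := by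
  have h : skewHom hq hc h2 n j ((chev hq n).e i) = UT ((chev hq n).e i)
      (if i = j then -((q - q⁻¹)⁻¹ • (t K q n i i * ti K q n (i + 1) -
        ti K q n i * t K q n (i + 1) (i + 1))) else 0) ((chev hq n).e i) := by
    rw [chev_e, map_smul, map_mul, skewHom_x _ _ _ _ hi, skewHom_gi _ _ _ _ hi]
    change _ • (UT _ _ _ * UT _ _ _) = _
    rw [UT_mul, UT_smul]
    refine UT_congr ?_ ?_ rfl
    · rw [smul_mul_smul_comm, mul_inv_cancel₀ (BorelData.twist_ne_zero hq j _), one_smul]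
      rfl
    · split_ifs with h
      · subst h
        change _ • (_ * 0 + (t K q n i i - ti K q n i * t K q n (i + 1) (i + 1) *
          t K q n (i + 1) (i + 1)) * ti K q n (i + 1)) = _
        rw [mul_zero, zero_add, sub_mul, mul_assoc _ _ (ti K q n (i + 1)), t_ti, mul_one,
          neg_smul]
      · simp
  rw [skewDer_mul hq hc h2 j h]
  split_ifs
  · rw [map_neg, map_smul, map_sub, map_mul, map_mul, ← sub_eq_add_neg]
  · simp

/-- A criterion for an operator to vanish: it kills `1` and skew commutes with left multiplication
by a set of generators. -/
theorem eq_zero_of_generators (hq : q ≠ 0) (hc : q - q⁻¹ ≠ 0) {S : Module.End K (FqBp K q n)}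
    (h1 : S 1 = 0)
    (hg : ∀ i < n, ∃ r : K, S * Lm (t K q n i i) = r • (Lm (t K q n i i) * S))
    (hgi : ∀ i < n, ∃ r : K, S * Lm (ti K q n i) = r • (Lm (ti K q n i) * S))
    (he : ∀ i, i + 1 < n → S * Lm ((chev hq n).e i) = Lm ((chev hq n).e i) * S) : S = 0 := by
  have key : ∀ (a : FqBp K q n) (r : K), S * Lm a = r • (Lm a * S) →
      ∀ y, S y = 0 → S (a * y) = 0 := by
    intro a r h y hy
    have := LinearMap.congr_fun h y
    change S (a * y) = r • (a * S y) at this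
    rw [this, hy, mul_zero, smul_zero]
  -- The elements whose left multiplication preserves the kernel of `S` form a subalgebra.
  let B : Subalgebra K (FqBp K q n) :=
    { carrier := {a | ∀ y, S y = 0 → S (a * y) = 0}
      mul_mem' := by
        intro a b ha hb y hy
        rw [mul_assoc]; exact ha _ (hb _ hy)
      add_mem' := by
        intro a b ha hb y hy
        rw [add_mul, map_add, ha _ hy, hb _ hy, add_zero]
      algebraMap_mem' := by
        intro r y hy
        rw [← Algebra.smul_def, map_smul, hy, smul_zero] }
  have hB : B = ⊤ := by
    have hgB : ∀ i, t K q n i i ∈ B := fun i => by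
      rcases lt_or_ge i n with hi | hi
      · obtain ⟨r, hr⟩ := hg i hi
        exact key _ r hr
      · rw [t_out (by omega), if_pos rfl]; exact B.one_mem
    refine subalgebra_eq_top hc B hgB (fun i => ?_) (fun i => ?_)
    · rcases lt_or_ge i n with hi | hi
      · obtain ⟨r, hr⟩ := hgi i hi
        exact key _ r hr
      · rw [ti_out hi]; exact B.one_mem
    · rcases lt_or_ge (i + 1) n with hi | hi
      · have hx : t K q n i (i + 1) =
            (-(q - q⁻¹)) • ((chev hq n).e i * t K q n (i + 1) (i + 1)) := by
          rw [chev_e, smul_mul_assoc, mul_assoc, ti_t, mul_one, smul_smul, neg_mul_neg,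
            mul_inv_cancel₀ hc, one_smul]
        rw [hx]
        exact B.smul_mem (B.mul_mem (key _ 1 (by rw [one_smul]; exact he i hi)) (hgB _)) _
      · rw [t_out (by omega), if_neg (by omega)]; exact B.zero_mem
  ext y
  have hy : y ∈ B := hB ▸ Algebra.mem_top
  have := hy 1 h1
  rwa [mul_one] at this

end Skew

end FqBp

/-! ### Relations among the skew derivations -/

section SerreF

variable {K : Type} [Field K] {q κ : K} {A : Type} [Ring A] [Algebra K A]

/-- The Serre element of `f₁`, `f₂` commutes with `e` when `f₁` and `f₂` do. The next two lemmas give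
the same conclusion when one of them fails to commute with `e`, its commutator being a multiple of
`k - k'` as for Chevalley generators. -/
theorem comm_of_comm {e f₁ f₂ : A} (h1 : e * f₁ = f₁ * e) (h2 : e * f₂ = f₂ * e) :
    e * (f₁ * f₁ * f₂ + f₂ * (f₁ * f₁) - (q + q⁻¹) • (f₁ * f₂ * f₁)) =
      (f₁ * f₁ * f₂ + f₂ * (f₁ * f₁) - (q + q⁻¹) • (f₁ * f₂ * f₁)) * e := by
  simp only [mul_add, add_mul, mul_sub, sub_mul, mul_smul_comm, smul_mul_assoc, mul_assoc,
    h1, reas h1, h2, reas h2]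

theorem comm_of_bracket_single (hq : q ≠ 0) {e f₁ f₂ k k' : A} (h1 : e * f₁ = f₁ * e)
    (h2 : e * f₂ = f₂ * e + κ • (k - k'))
    (hk : k * f₁ = q • (f₁ * k)) (hk' : k' * f₁ = q⁻¹ • (f₁ * k')) :
    e * (f₁ * f₁ * f₂ + f₂ * (f₁ * f₁) - (q + q⁻¹) • (f₁ * f₂ * f₁)) =
      (f₁ * f₁ * f₂ + f₂ * (f₁ * f₁) - (q + q⁻¹) • (f₁ * f₂ * f₁)) * e := by
  simp only [mul_add, add_mul, mul_sub, sub_mul, mul_smul_comm, smul_mul_assoc, mul_assoc,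
    smul_sub, smul_add, smul_smul, h1, reas h1, h2, reas h2, hk, reas hk, hk', reas hk']
  match_scalars <;> field_simp <;> ring

theorem comm_of_bracket_double (hq : q ≠ 0) {e f₁ f₂ k k' : A} (h2 : e * f₂ = f₂ * e)
    (h1 : e * f₁ = f₁ * e + κ • (k - k'))
    (hk : k * f₁ = (q⁻¹ * q⁻¹) • (f₁ * k)) (hk' : k' * f₁ = (q * q) • (f₁ * k'))
    (hl : k * f₂ = q • (f₂ * k)) (hl' : k' * f₂ = q⁻¹ • (f₂ * k')) :
    e * (f₁ * f₁ * f₂ + f₂ * (f₁ * f₁) - (q + q⁻¹) • (f₁ * f₂ * f₁)) =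
      (f₁ * f₁ * f₂ + f₂ * (f₁ * f₁) - (q + q⁻¹) • (f₁ * f₂ * f₁)) * e := by
  simp only [mul_add, add_mul, mul_sub, sub_mul, mul_smul_comm, smul_mul_assoc, mul_assoc,
    smul_sub, smul_add, smul_smul, h1, reas h1, h2, reas h2, hk, reas hk, hk', reas hk',
    hl, reas hl, hl', reas hl']
  match_scalars <;> field_simp <;> ring

end SerreF

namespace FqBp

variable {K : Type} [Field K] {q : K} {n : ℕ}
variable (hq : q ≠ 0) (hc : q - q⁻¹ ≠ 0) (h2 : 1 + q ^ 2 ≠ 0)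

local notation "Lm" => Algebra.lmul K (FqBp K q n)
local notation "der" => skewDer (n := n) hq hc h2

theorem e_skewDer (j : ℕ) {i : ℕ} (hi : i + 1 < n) :
    Lm ((chev hq n).e i) * der j = der j * Lm ((chev hq n).e i) +
      (if i = j then (q - q⁻¹)⁻¹ • (Lm (t K q n i i) * Lm (ti K q n (i + 1)) -
        Lm (ti K q n i) * Lm (t K q n (i + 1) (i + 1))) else 0) := by
  rw [skewDer_e hq hc h2 j hi, sub_add_cancel]

theorem e_skewDer_self {i : ℕ} (hi : i + 1 < n) :
    Lm ((chev hq n).e i) * der i = der i * Lm ((chev hq n).e i) +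
      (q - q⁻¹)⁻¹ • (Lm (t K q n i i) * Lm (ti K q n (i + 1)) -
        Lm (ti K q n i) * Lm (t K q n (i + 1) (i + 1))) := by
  rw [e_skewDer hq hc h2 i hi, if_pos rfl]

theorem e_skewDer_of_ne {i j : ℕ} (hi : i + 1 < n) (h : i ≠ j) :
    Lm ((chev hq n).e i) * der j = der j * Lm ((chev hq n).e i) := by
  rw [e_skewDer hq hc h2 j hi, if_neg h, add_zero]

theorem g_skewDer (j : ℕ) {i : ℕ} (hi : i < n) :
    Lm (t K q n i i) * der j = (BorelData.twist q j i)⁻¹ • (der j * Lm (t K q n i i)) := by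
  rw [skewDer_g hq hc h2 j hi, smul_smul, inv_mul_cancel₀ (BorelData.twist_ne_zero hq j i),
    one_smul]

theorem gi_skewDer (j : ℕ) {i : ℕ} (hi : i < n) :
    Lm (ti K q n i) * der j = BorelData.twist q j i • (der j * Lm (ti K q n i)) := by
  rw [skewDer_gi hq hc h2 j hi, smul_smul, mul_inv_cancel₀ (BorelData.twist_ne_zero hq j i),
    one_smul]

/-- The relation between `K_i = G_i G_{i+1}⁻¹` and `F_j`. -/
theorem k_skewDer (j : ℕ) {i : ℕ} (hi : i + 1 < n) {r : K}
    (hr : (BorelData.twist q j i)⁻¹ * BorelData.twist q j (i + 1) = r) :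
    Lm (t K q n i i) * Lm (ti K q n (i + 1)) * der j =
      r • (der j * (Lm (t K q n i i) * Lm (ti K q n (i + 1)))) := by
  rw [mul_assoc, gi_skewDer _ _ _ _ hi, mul_smul_comm, ← mul_assoc,
    g_skewDer _ _ _ _ (by omega), smul_mul_assoc, smul_smul, mul_assoc, mul_comm, hr]

/-- The relation between `K_i⁻¹ = G_i⁻¹ G_{i+1}` and `F_j`. -/
theorem k_skewDer' (j : ℕ) {i : ℕ} (hi : i + 1 < n) {r : K}
    (hr : BorelData.twist q j i * (BorelData.twist q j (i + 1))⁻¹ = r) :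
    Lm (ti K q n i) * Lm (t K q n (i + 1) (i + 1)) * der j =
      r • (der j * (Lm (ti K q n i) * Lm (t K q n (i + 1) (i + 1)))) := by
  rw [mul_assoc, g_skewDer _ _ _ _ hi, mul_smul_comm, ← mul_assoc,
    gi_skewDer _ _ _ _ (by omega), smul_mul_assoc, smul_smul, mul_assoc, mul_comm, hr]

/-- The Serre relation for the operators `F_a`, `F_b`. The difference of the two sides kills `1` and
skew commutes with left multiplication by the `G_i^{±1}` and `E_i`, hence vanishes. -/
theorem skewDer_serre {a b : ℕ} (hab : a + 1 = b ∨ b + 1 = a) :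
    der a * der a * der b + der b * (der a * der a) = (q + q⁻¹) • (der a * der b * der a) := by
  rw [← sub_eq_zero]
  have hk : ∀ {x : FqBp K q n} {r s : K}, der a * Lm x = r • (Lm x * der a) →
      der b * Lm x = s • (Lm x * der b) → ∃ r : K,
      (der a * der a * der b + der b * (der a * der a) - (q + q⁻¹) • (der a * der b * der a)) *
        Lm x = r • (Lm x * (der a * der a * der b + der b * (der a * der a) -
          (q + q⁻¹) • (der a * der b * der a))) := by
    intro x r s hr hs
    refine ⟨r * r * s, ?_⟩
    simp only [mul_add, add_mul, mul_sub, sub_mul, mul_smul_comm, smul_mul_assoc, mul_assoc,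
      smul_sub, smul_add, smul_smul, hr, hs, reas hr, reas hs]
    match_scalars <;> ring
  apply eq_zero_of_generators hq hc
  · simp [skewDer_one]
  · exact fun i hi => hk (skewDer_g hq hc h2 a hi) (skewDer_g hq hc h2 b hi)
  · exact fun i hi => hk (skewDer_gi hq hc h2 a hi) (skewDer_gi hq hc h2 b hi)
  · intro i hi
    symm
    by_cases h1 : i = a
    · subst h1
      have t1 : BorelData.twist q b i * (BorelData.twist q b (i + 1))⁻¹ = q⁻¹ := by
        rcases hab with rfl | rfl
        · rw [BorelData.twist_self, BorelData.twist_of_ne q (by omega) (by omega), one_mul]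
        · rw [BorelData.twist_succ, BorelData.twist_of_ne q (by omega) (by omega), inv_one,
            mul_one]
      refine comm_of_bracket_double hq (e_skewDer_of_ne hq hc h2 hi (by omega))
        (e_skewDer_self hq hc h2 hi) (k_skewDer hq hc h2 i hi ?_) (k_skewDer' hq hc h2 i hi ?_)
        (k_skewDer hq hc h2 b hi ?_) (k_skewDer' hq hc h2 b hi t1)
      · rw [BorelData.twist_self, BorelData.twist_succ]
      · rw [BorelData.twist_self, BorelData.twist_succ, inv_inv]
      · rw [← inv_inj, ← t1, mul_inv, inv_inv]
    · by_cases h3 : i = b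
      · subst h3
        have t1 : BorelData.twist q a i * (BorelData.twist q a (i + 1))⁻¹ = q⁻¹ := by
          rcases hab with rfl | rfl
          · rw [BorelData.twist_succ, BorelData.twist_of_ne q (by omega) (by omega), inv_one,
              mul_one]
          · rw [BorelData.twist_self, BorelData.twist_of_ne q (by omega) (by omega), one_mul]
        refine comm_of_bracket_single hq (e_skewDer_of_ne hq hc h2 hi h1)
          (e_skewDer_self hq hc h2 hi) (k_skewDer hq hc h2 a hi ?_)
          (k_skewDer' hq hc h2 a hi t1)
        rw [← inv_inj, ← t1, mul_inv, inv_inv]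
      · exact comm_of_comm (e_skewDer_of_ne hq hc h2 hi h1) (e_skewDer_of_ne hq hc h2 hi h3)

/-- Operators `F_a`, `F_b` with distant indices commute, for the same reason as in `skewDer_serre`. -/
theorem skewDer_comm {a b : ℕ} (hab : a + 1 < b ∨ b + 1 < a) :
    der a * der b = der b * der a := by
  rw [← sub_eq_zero]
  have hk : ∀ {x : FqBp K q n} {r s : K}, der a * Lm x = r • (Lm x * der a) →
      der b * Lm x = s • (Lm x * der b) → ∃ r : K,
      (der a * der b - der b * der a) * Lm x = r • (Lm x * (der a * der b - der b * der a)) := by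
    intro x r s hr hs
    refine ⟨r * s, ?_⟩
    simp only [mul_sub, sub_mul, mul_smul_comm, smul_mul_assoc, mul_assoc,
      smul_sub, smul_smul, hr, hs, reas hr, reas hs]
    match_scalars <;> ring
  apply eq_zero_of_generators hq hc
  · simp [skewDer_one]
  · exact fun i hi => hk (skewDer_g hq hc h2 a hi) (skewDer_g hq hc h2 b hi)
  · exact fun i hi => hk (skewDer_gi hq hc h2 a hi) (skewDer_gi hq hc h2 b hi)
  · intro i hi
    have aux : ∀ {a b : ℕ}, (a + 1 < b ∨ b + 1 < a) → i ≠ b →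
        (der a * der b - der b * der a) * Lm ((chev hq n).e i) =
          Lm ((chev hq n).e i) * (der a * der b - der b * der a) := by
      intro a b hab hib
      have eb := e_skewDer_of_ne hq hc h2 hi hib
      by_cases h1 : i = a
      · subst h1
        have ea := e_skewDer_self hq hc h2 hi
        have k1 := k_skewDer hq hc h2 b hi (r := 1) (by
          rw [BorelData.twist_of_ne q (by omega) (by omega),
            BorelData.twist_of_ne q (by omega) (by omega), inv_one, one_mul])
        have k2 := k_skewDer' hq hc h2 b hi (r := 1) (by
          rw [BorelData.twist_of_ne q (by omega) (by omega),
            BorelData.twist_of_ne q (by omega) (by omega), inv_one, one_mul])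
        rw [one_smul, mul_assoc] at k1 k2
        simp only [mul_sub, sub_mul, mul_add, add_mul, mul_smul_comm, smul_mul_assoc, mul_assoc,
          smul_sub, ea, reas ea, eb, reas eb, k1, k2]
        abel
      · have ea := e_skewDer_of_ne hq hc h2 hi h1
        simp only [mul_sub, sub_mul, mul_assoc, ea, reas ea, eb, reas eb]
    by_cases hib : i = b
    · have hia : i ≠ a := by omega
      have := aux hab.symm hia
      simp only [sub_mul, mul_sub] at this ⊢
      rw [← neg_inj, neg_sub, neg_sub]
      exact this
    · exact aux hab hib

end FqBp

/-! ### The representation of the quantum group on functions -/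

namespace ChevData

variable {K : Type} [Field K] {q : K} {A : Type} [Ring A] [Algebra K A] (D : ChevData K q A)

theorem serre {i j : ℕ} (h : i + 1 = j ∨ j + 1 = i) :
    D.e i * D.e i * D.e j + D.e j * (D.e i * D.e i) = (q + q⁻¹) • (D.e i * D.e j * D.e i) := by
  rcases h with rfl | rfl
  exacts [D.serre_left i, D.serre_right j]

theorem comm {i j : ℕ} (h : i + 1 < j ∨ j + 1 < i) : D.e i * D.e j = D.e j * D.e i := by
  rcases h with h | h
  exacts [D.e_e i j h, (D.e_e j i h).symm]

theorem g_e_zpow (i j : ℕ) : D.g i * D.e j =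
    (q ^ (((if i = j then 1 else 0) - (if i = j + 1 then 1 else 0)) : ℤ)) • (D.e j * D.g i) := by
  by_cases h1 : i = j
  · subst h1; simp [D.g_e_self]
  · by_cases h2 : i = j + 1
    · subst h2; simp [D.g_e_succ]
    · simp [h1, h2, D.g_e i j h1 h2]

theorem g_gi_comm (i j : ℕ) : D.g i * D.gi j = D.gi j * D.g i :=
  (inv_comm (D.g_gi j) (D.gi_g j) (D.g_g j i)).symm

theorem gi_gi (i j : ℕ) : D.gi i * D.gi j = D.gi j * D.gi i :=
  inv_comm (D.g_gi i) (D.gi_g i) (D.g_gi_comm i j)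

end ChevData

namespace BorelData

/-- The exponent occurring in the relation between `G_i` and `F_j`. -/
theorem twist_inv {K : Type} [Field K] (q : K) (j i : ℕ) : (twist q j i)⁻¹ =
    q ^ (((if i = j + 1 then 1 else 0) - (if i = j then 1 else 0)) : ℤ) := by
  by_cases h1 : i = j
  · subst h1; simp [twist_self]
  · by_cases h2 : i = j + 1
    · subst h2; simp [twist_succ]
    · simp [h1, h2, twist_of_ne]

end BorelData

namespace FqBp

variable {K : Type} [Field K] {q : K} {n : ℕ}
variable (hq : q ≠ 0) (hc : q - q⁻¹ ≠ 0) (h2 : 1 + q ^ 2 ≠ 0)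

local notation "Lm" => Algebra.lmul K (FqBp K q n)
local notation "der" => skewDer (n := n) hq hc h2

/-- The representation of `U_q(gl_n)` on `FqBp K q n` in which `G_i^{±1}` and `E_i` act by left
multiplication by the corresponding elements and `F_j` by the skew derivation `skewDer j`. -/
def rho (n : ℕ) : Uq K q n →ₐ[K] Module.End K (FqBp K q n) :=
  RingQuot.liftAlgHom K ⟨FreeAlgebra.lift K (fun
    | .E i => Algebra.lmul K (FqBp K q n) ((chev hq n).e i)
    | .F j => skewDer hq hc h2 n j
    | .G i => Algebra.lmul K (FqBp K q n) (t K q n i i)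
    | .Gi i => Algebra.lmul K (FqBp K q n) (ti K q n i)), by
      intro a b h
      induction h with
      | ggi i =>
        simp only [fg, fgi, map_mul, map_one, FreeAlgebra.lift_ι_apply]
        rw [← map_mul, t_ti, map_one]
      | gig i =>
        simp only [fg, fgi, map_mul, map_one, FreeAlgebra.lift_ι_apply]
        rw [← map_mul, ti_t, map_one]
      | gg i j =>
        simp only [fg, fgi, map_mul, FreeAlgebra.lift_ι_apply]
        rw [← map_mul, ← map_mul]; exact congrArg _ ((chev hq n).g_g i j)
      | ggi' i j =>
        simp only [fg, fgi, map_mul, FreeAlgebra.lift_ι_apply]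
        rw [← map_mul, ← map_mul]; exact congrArg _ ((chev hq n).g_gi_comm i j)
      | gigi i j =>
        simp only [fg, fgi, map_mul, FreeAlgebra.lift_ι_apply]
        rw [← map_mul, ← map_mul]; exact congrArg _ ((chev hq n).gi_gi i j)
      | gf i j =>
        simp only [fg, ff, map_mul, map_smul, FreeAlgebra.lift_ι_apply]
        rw [← BorelData.twist_inv]
        exact g_skewDer hq hc h2 j i.2
      | ge i j =>
        simp only [fg, fe, map_mul, map_smul, FreeAlgebra.lift_ι_apply]
        rw [← map_mul, ← map_mul, ← map_smul]
        exact congrArg _ ((chev hq n).g_e_zpow i j)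
      | ef i j =>
        have hi : (i : ℕ) + 1 < n := by have := i.2; omega
        by_cases hij : i = j
        · subst hij
          simp only [fg, fe, ff, fgi, map_mul, map_add, FreeAlgebra.lift_ι_apply, if_true,
            map_smul, map_sub]
          exact e_skewDer_self hq hc h2 hi
        · simp only [hij, fe, ff, map_mul, map_add, FreeAlgebra.lift_ι_apply, if_false, map_zero,
            add_zero]
          exact e_skewDer_of_ne hq hc h2 hi (fun h => hij (Fin.ext h))
      | ee i j h =>
        simp only [fe, map_mul, FreeAlgebra.lift_ι_apply]
        rw [← map_mul, ← map_mul]; exact congrArg _ ((chev hq n).comm h)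
      | ffcomm i j h =>
        simp only [ff, map_mul, FreeAlgebra.lift_ι_apply]
        exact skewDer_comm hq hc h2 h
      | serreE i j h =>
        simp only [fe, map_mul, map_add, map_smul, FreeAlgebra.lift_ι_apply]
        simp only [← map_mul, ← map_add, ← map_smul]
        exact congrArg _ ((chev hq n).serre h)
      | serreF i j h =>
        simp only [ff, map_mul, map_add, map_smul, FreeAlgebra.lift_ι_apply]
        exact skewDer_serre hq hc h2 h⟩

theorem rho_E (i : Fin (n - 1)) : rho hq hc h2 n (uE K q n i) = Lm ((chev hq n).e i) := by
  refine (RingQuot.liftAlgHom_mkAlgHom_apply _ _ _ _).trans ?_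
  rw [fe, FreeAlgebra.lift_ι_apply]

theorem rho_G (i : Fin n) : rho hq hc h2 n (uG K q n i) = Lm (t K q n i i) := by
  refine (RingQuot.liftAlgHom_mkAlgHom_apply _ _ _ _).trans ?_
  rw [fg, FreeAlgebra.lift_ι_apply]

end FqBp

namespace Uq

variable {K : Type} [Field K] {q : K} {n : ℕ}

theorem rel {a b : FreeAlgebra K (GlGen n)} (h : GlRel K q n a b) :
    RingQuot.mkAlgHom K (GlRel K q n) a = RingQuot.mkAlgHom K (GlRel K q n) b :=
  RingQuot.mkAlgHom_rel K h

/-- The generator `G_i`, with the junk value `1` out of range so that it stays invertible. -/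
def g (K : Type) [Field K] (q : K) (n i : ℕ) : Uq K q n :=
  if h : i < n then uG K q n ⟨i, h⟩ else 1
/-- The generator `G_i⁻¹`, with the junk value `1` out of range. -/
def gi (K : Type) [Field K] (q : K) (n i : ℕ) : Uq K q n :=
  if h : i < n then uGi K q n ⟨i, h⟩ else 1

theorem g_in {i : ℕ} (h : i < n) : g K q n i = uG K q n ⟨i, h⟩ := dif_pos h
theorem gi_in {i : ℕ} (h : i < n) : gi K q n i = uGi K q n ⟨i, h⟩ := dif_pos h
theorem g_out {i : ℕ} (h : n ≤ i) : g K q n i = 1 := dif_neg (by omega)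
theorem gi_out {i : ℕ} (h : n ≤ i) : gi K q n i = 1 := dif_neg (by omega)
theorem e_in {i : ℕ} (h : i < n - 1) : eN K q n i = uE K q n ⟨i, h⟩ := dif_pos h
theorem e_out {i : ℕ} (h : n ≤ i + 1) : eN K q n i = 0 := dif_neg (by omega)

theorem g_e_zpow (i j : ℕ) (h : i < n) (h' : j < n - 1) : g K q n i * eN K q n j =
    (q ^ (((if i = j then 1 else 0) - (if i = j + 1 then 1 else 0)) : ℤ)) •
      (eN K q n j * g K q n i) := by
  rw [g_in h, e_in h']
  have := rel (q := q) (GlRel.ge ⟨i, h⟩ ⟨j, h'⟩)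
  rw [map_mul, map_smul, map_mul] at this
  exact this

theorem serreE {i j : ℕ} (h : i + 1 = j ∨ j + 1 = i) :
    eN K q n i * eN K q n i * eN K q n j + eN K q n j * (eN K q n i * eN K q n i) =
      (q + q⁻¹) • (eN K q n i * eN K q n j * eN K q n i) := by
  rcases lt_or_ge i (n - 1) with hi | hi
  · rcases lt_or_ge j (n - 1) with hj | hj
    · rw [e_in hi, e_in hj]
      have := rel (q := q) (GlRel.serreE ⟨i, hi⟩ ⟨j, hj⟩ h)
      simp only [map_mul, map_add, map_smul] at this
      exact this
    · simp [e_out (i := j) (n := n) (by omega)]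
  · simp [e_out (i := i) (n := n) (by omega)]

/-- The Chevalley generators of the positive part of `U_q(gl_n)`, extended to all indices by `G_i = 1`
and `E_i = 0`. -/
def chev (K : Type) [Field K] (q : K) (n : ℕ) : ChevData K q (Uq K q n) where
  g := g K q n
  gi := gi K q n
  e := eN K q n
  g_gi i := by
    rcases lt_or_ge i n with h | h
    · rw [g_in h, gi_in h]
      have := rel (q := q) (GlRel.ggi ⟨i, h⟩)
      rwa [map_mul, map_one] at this
    · rw [g_out h, gi_out h, one_mul]
  gi_g i := by
    rcases lt_or_ge i n with h | h
    · rw [g_in h, gi_in h]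
      have := rel (q := q) (GlRel.gig ⟨i, h⟩)
      rwa [map_mul, map_one] at this
    · rw [g_out h, gi_out h, one_mul]
  g_g i j := by
    rcases lt_or_ge i n with h | h
    · rcases lt_or_ge j n with h' | h'
      · rw [g_in h, g_in h']
        have := rel (q := q) (GlRel.gg ⟨i, h⟩ ⟨j, h'⟩)
        rwa [map_mul, map_mul] at this
      · rw [g_out h', one_mul, mul_one]
    · rw [g_out h, one_mul, mul_one]
  g_e_self i := by
    rcases lt_or_ge i (n - 1) with h | h
    · simpa using g_e_zpow (K := K) (q := q) i i (by omega) h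
    · simp [e_out (i := i) (n := n) (by omega)]
  g_e_succ i := by
    rcases lt_or_ge i (n - 1) with h | h
    · simpa using g_e_zpow (K := K) (q := q) (i + 1) i (by omega) h
    · simp [e_out (i := i) (n := n) (by omega)]
  g_e i j h1 h2 := by
    rcases lt_or_ge j (n - 1) with h | h
    · rcases lt_or_ge i n with h' | h'
      · simpa [h1, h2] using g_e_zpow (K := K) (q := q) i j h' h
      · rw [g_out h', one_mul, mul_one]
    · simp [e_out (i := j) (n := n) (by omega)]
  e_e i j h := by
    rcases lt_or_ge i (n - 1) with hi | hi
    · rcases lt_or_ge j (n - 1) with hj | hj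
      · rw [e_in hi, e_in hj]
        have := rel (q := q) (GlRel.ee ⟨i, hi⟩ ⟨j, hj⟩ (Or.inl h))
        rwa [map_mul, map_mul] at this
      · simp [e_out (i := j) (n := n) (by omega)]
    · simp [e_out (i := i) (n := n) (by omega)]
  serre_left i := serreE (Or.inl rfl)
  serre_right i := serreE (Or.inr rfl)

end Uq

/-! ### The isomorphism and its compatibility with the Hopf structure -/

namespace FqBp

variable {K : Type} [Field K] {q : K} {n : ℕ}
variable (hq : q ≠ 0) (hc : q - q⁻¹ ≠ 0) (h2 : 1 + q ^ 2 ≠ 0)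

/-- The algebra map `FqBp K q n → U_q(gl_n)` inverse to `ζ_+` on the Borel subalgebra. -/
def psi (n : ℕ) : FqBp K q n →ₐ[K] Uq K q n := lift hq hc h2 n ((Uq.chev K q n).toBorel hq)

theorem psi_g (i : ℕ) : psi hq hc h2 n (t K q n i i) = Uq.g K q n i := by
  rcases lt_or_ge i n with hi | hi
  · exact lift_g hq hc h2 _ hi
  · rw [t_out (by omega), if_pos rfl, map_one, Uq.g_out hi]

theorem psi_gi (i : ℕ) : psi hq hc h2 n (ti K q n i) = Uq.gi K q n i := by
  refine left_eq_of_inverse (u := psi hq hc h2 n (t K q n i i)) ?_ ?_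
  · rw [← map_mul, ti_t, map_one]
  · rw [psi_g]; exact (Uq.chev K q n).g_gi i

theorem psi_x (i : ℕ) : psi hq hc h2 n (t K q n i (i + 1)) =
    (-(q - q⁻¹)) • (eN K q n i * Uq.g K q n (i + 1)) := by
  rcases lt_or_ge (i + 1) n with hi | hi
  · exact lift_x hq hc h2 _ hi
  · rw [t_out (by omega), if_neg (by omega), map_zero, Uq.e_out hi, zero_mul, smul_zero]

theorem psi_e (i : ℕ) : psi hq hc h2 n ((chev hq n).e i) = eN K q n i := by
  rw [chev_e, map_smul, map_mul, psi_x, psi_gi, smul_mul_assoc, mul_assoc, smul_smul,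
    neg_mul_neg, inv_mul_cancel₀ hc, one_smul]
  have h := (Uq.chev K q n).g_gi (i + 1)
  exact (congrArg (eN K q n i * ·) h).trans (mul_one _)

/-- Through `psi`, the representation `rho` restricts to left multiplication. -/
theorem rho_comp_psi : (rho hq hc h2 n).comp (psi hq hc h2 n) = Algebra.lmul K (FqBp K q n) := by
  have hg : ∀ i, rho hq hc h2 n (Uq.g K q n i) = Algebra.lmul K (FqBp K q n) (t K q n i i) := by
    intro i
    rcases lt_or_ge i n with hi | hi
    · rw [Uq.g_in hi, rho_G]
    · rw [Uq.g_out hi, t_out (by omega), if_pos rfl, map_one, map_one]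
  refine hom_ext hc (fun i => ?_) (fun i => ?_)
  · rw [AlgHom.comp_apply, psi_g, hg]
  · rw [AlgHom.comp_apply, psi_x, map_smul, map_mul, hg]
    rcases lt_or_ge (i + 1) n with hi | hi
    · rw [Uq.e_in (by omega), rho_E, ← map_mul, ← map_smul, chev_e, smul_mul_assoc, mul_assoc,
        ti_t, mul_one, smul_smul, neg_mul_neg, mul_inv_cancel₀ hc, one_smul]
    · have h0 : t K q n i (i + 1) = 0 := by rw [t_out (by omega), if_neg (by omega)]
      rw [Uq.e_out hi, h0, map_zero, map_zero, zero_mul, smul_zero]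

/-- Acting on `1` through `rho` is a left inverse of `psi`. -/
theorem psi_injective : Function.Injective (psi hq hc h2 n) := by
  intro a b h
  have e := congrArg (fun u => rho hq hc h2 n u 1) h
  have key : ∀ y, rho hq hc h2 n (psi hq hc h2 n y) 1 = y := by
    intro y
    have := LinearMap.congr_fun (AlgHom.congr_fun (rho_comp_psi (n := n) hq hc h2) y) 1
    exact this.trans (mul_one y)
  simpa only [key] using e

theorem psi_range : (psi hq hc h2 n).range = UbP K q n := by
  apply le_antisymm
  · rintro _ ⟨y, rfl⟩
    have hg : ∀ i, Uq.g K q n i ∈ UbP K q n := by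
      intro i
      rcases lt_or_ge i n with hi | hi
      · rw [Uq.g_in hi]; exact (sG K q n _).2
      · rw [Uq.g_out hi]; exact Subalgebra.one_mem _
    -- Generators of `FqBp K q n` are sent into the Borel subalgebra.
    have hS : (UbP K q n).comap (psi hq hc h2 n) = ⊤ := by
      refine subalgebra_eq_top hc _ (fun i => ?_) (fun i => ?_) (fun i => ?_)
      · rw [Subalgebra.mem_comap, psi_g]; exact hg i
      · rw [Subalgebra.mem_comap, psi_gi]
        rcases lt_or_ge i n with hi | hi
        · rw [Uq.gi_in hi]; exact (sGi K q n _).2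
        · rw [Uq.gi_out hi]; exact Subalgebra.one_mem _
      · rw [Subalgebra.mem_comap, psi_x]
        refine Subalgebra.smul_mem _ (Subalgebra.mul_mem _ ?_ (hg _)) _
        rcases lt_or_ge (i + 1) n with hi | hi
        · rw [Uq.e_in (by omega)]; exact (sE K q n _).2
        · rw [Uq.e_out hi]; exact Subalgebra.zero_mem _
    have : y ∈ (UbP K q n).comap (psi hq hc h2 n) := hS ▸ Algebra.mem_top
    exact this
  · refine Algebra.adjoin_le ?_
    rintro x (⟨i, rfl⟩ | ⟨i, rfl⟩ | ⟨j, rfl⟩)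
    · exact ⟨t K q n i i, (psi_g hq hc h2 _).trans (Uq.g_in i.2)⟩
    · exact ⟨ti K q n i, (psi_gi hq hc h2 _).trans (Uq.gi_in i.2)⟩
    · exact ⟨(chev hq n).e j, (psi_e hq hc h2 _).trans (Uq.e_in j.2)⟩

/-- The isomorphism `ζ_+`. -/
def zeta (n : ℕ) : UbP K q n ≃ₐ[K] FqBp K q n :=
  ((AlgEquiv.ofInjective _ (psi_injective hq hc h2)).trans
    (Subalgebra.equivOfEq _ _ (psi_range hq hc h2))).symm

theorem zeta_eq {x : UbP K q n} {y : FqBp K q n} (h : psi hq hc h2 n y = x) :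
    zeta hq hc h2 n x = y := by
  rw [zeta, AlgEquiv.symm_apply_eq]
  exact Subtype.ext h.symm

theorem zeta_G (i : Fin n) : zeta hq hc h2 n (sG K q n i) = t K q n i i :=
  zeta_eq _ _ _ ((psi_g hq hc h2 _).trans (Uq.g_in i.2))

theorem zeta_Gi (i : Fin n) : zeta hq hc h2 n (sGi K q n i) = ti K q n i :=
  zeta_eq _ _ _ ((psi_gi hq hc h2 _).trans (Uq.gi_in i.2))

theorem zeta_E (j : Fin (n - 1)) : zeta hq hc h2 n (sE K q n j) =
    (-(q - q⁻¹)⁻¹) • (t K q n j (j + 1) * ti K q n (j + 1)) :=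
  zeta_eq _ _ _ ((psi_e hq hc h2 _).trans (Uq.e_in j.2))

/-- Algebra maps out of the Borel subalgebra are determined by the generators. -/
theorem borel_hom_ext {A : Type} [Ring A] [Algebra K A] {φ χ : UbP K q n →ₐ[K] A}
    (hg : ∀ i, φ (sG K q n i) = χ (sG K q n i)) (hgi : ∀ i, φ (sGi K q n i) = χ (sGi K q n i))
    (he : ∀ j, φ (sE K q n j) = χ (sE K q n j)) : φ = χ := by
  refine AlgHom.ext fun x => ?_
  obtain ⟨x, hx⟩ := x
  induction hx using Algebra.adjoin_induction with
  | mem x h =>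
    rcases h with ⟨i, rfl⟩ | ⟨i, rfl⟩ | ⟨j, rfl⟩
    exacts [hg i, hgi i, he j]
  | algebraMap r => exact (φ.commutes r).trans (χ.commutes r).symm
  | add x y hx hy h1 h2 =>
    have e : (⟨x + y, Subalgebra.add_mem _ hx hy⟩ : UbP K q n) = ⟨x, hx⟩ + ⟨y, hy⟩ := rfl
    exact (congrArg φ e).trans ((by rw [map_add, map_add, h1, h2] :
      φ (⟨x, hx⟩ + ⟨y, hy⟩) = χ (⟨x, hx⟩ + ⟨y, hy⟩)).trans (congrArg χ e).symm)
  | mul x y hx hy h1 h2 =>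
    have e : (⟨x * y, Subalgebra.mul_mem _ hx hy⟩ : UbP K q n) = ⟨x, hx⟩ * ⟨y, hy⟩ := rfl
    exact (congrArg φ e).trans ((by rw [map_mul, map_mul, h1, h2] :
      φ (⟨x, hx⟩ * ⟨y, hy⟩) = χ (⟨x, hx⟩ * ⟨y, hy⟩)).trans (congrArg χ e).symm)

end FqBp

section Hopf

open FqBp

variable {K : Type} [Field K] {q : K} {n : ℕ}
variable (hq : q ≠ 0) (hc : q - q⁻¹ ≠ 0) (h2 : 1 + q ^ 2 ≠ 0)

/-- Both composites are algebra maps, so it suffices to compare them on the generators of the Borel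
subalgebra. -/
theorem zeta_comul
    (ΔU : UbP K q n →ₐ[K] UbP K q n ⊗[K] UbP K q n)
    (hΔU1 : ∀ i, ΔU (sG K q n i) = sG K q n i ⊗ₜ[K] sG K q n i)
    (hΔU2 : ∀ i, ΔU (sGi K q n i) = sGi K q n i ⊗ₜ[K] sGi K q n i)
    (hΔU3 : ∀ j, ΔU (sE K q n j) = sE K q n j ⊗ₜ[K] 1 +
        (sG K q n (idxlo j) * sGi K q n (idxhi j)) ⊗ₜ[K] sE K q n j)
    (ΔF : FqBp K q n →ₐ[K] FqBp K q n ⊗[K] FqBp K q n)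
    (hΔF1 : ∀ i j, ΔF (bT K q n i j) = ∑ l : Fin n, bT K q n i l ⊗ₜ[K] bT K q n l j) (x) :
    ΔF (zeta hq hc h2 n x) =
      (Algebra.TensorProduct.map (zeta hq hc h2 n).toAlgHom (zeta hq hc h2 n).toAlgHom)
        (ΔU x) := by
  have hT0 : ∀ i j : Fin n, j < i → bT K q n i j = 0 := fun i j h => by
    rw [← t_val]; exact t_zero h
  have hg : ∀ i : Fin n, ΔF (t K q n i i) = t K q n i i ⊗ₜ[K] t K q n i i := by
    intro i
    rw [t_val, hΔF1, Finset.sum_eq_single i]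
    · intro l _ hl
      rcases lt_or_gt_of_ne hl with h | h
      · rw [hT0 i l h, TensorProduct.zero_tmul]
      · rw [hT0 l i h, TensorProduct.tmul_zero]
    · simp
  have hgi : ∀ i : Fin n, ΔF (ti K q n i) = ti K q n i ⊗ₜ[K] ti K q n i := by
    intro i
    refine left_eq_of_inverse (A := FqBp K q n ⊗[K] FqBp K q n) (u := ΔF (t K q n i i)) ?_ ?_
    · rw [← map_mul, ti_t, map_one]
    · rw [hg, Algebra.TensorProduct.tmul_mul_tmul, t_ti]; rfl
  -- By triangularity only the terms `l = j` and `l = j + 1` of the sum survive.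
  have hx : ∀ j : Fin (n - 1), ΔF (t K q n j (j + 1)) =
      t K q n j j ⊗ₜ[K] t K q n j (j + 1) +
        t K q n j (j + 1) ⊗ₜ[K] t K q n (j + 1) (j + 1) := by
    intro j
    have hne : (idxlo j : Fin n) ≠ idxhi j := by simp [Fin.ext_iff, idxlo, idxhi]
    have h := hΔF1 (idxlo j) (idxhi j)
    rw [Finset.sum_eq_add (idxlo j) (idxhi j) hne] at h
    · simp only [← t_val] at h
      exact h
    · rintro l - ⟨h1, h3⟩
      rcases lt_or_gt_of_ne h1 with h | h
      · rw [hT0 _ _ h, TensorProduct.zero_tmul]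
      · rw [hT0 l (idxhi j), TensorProduct.tmul_zero]
        have h3' : (l : ℕ) ≠ j + 1 := fun h => h3 (Fin.ext h)
        have h' : (j : ℕ) < l := h
        change (j : ℕ) + 1 < l
        omega
    · simp
    · simp
  have : (ΔF.comp (zeta hq hc h2 n).toAlgHom) =
      (Algebra.TensorProduct.map (zeta hq hc h2 n).toAlgHom (zeta hq hc h2 n).toAlgHom).comp
        ΔU := by
    refine borel_hom_ext (fun i => ?_) (fun i => ?_) (fun j => ?_)
    · rw [AlgHom.comp_apply, AlgHom.comp_apply, hΔU1, Algebra.TensorProduct.map_tmul]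
      change ΔF (zeta hq hc h2 n _) = zeta hq hc h2 n _ ⊗ₜ zeta hq hc h2 n _
      rw [zeta_G, hg]
    · rw [AlgHom.comp_apply, AlgHom.comp_apply, hΔU2, Algebra.TensorProduct.map_tmul]
      change ΔF (zeta hq hc h2 n _) = zeta hq hc h2 n _ ⊗ₜ zeta hq hc h2 n _
      rw [zeta_Gi, hgi]
    · rw [AlgHom.comp_apply, AlgHom.comp_apply, hΔU3, map_add, Algebra.TensorProduct.map_tmul,
        Algebra.TensorProduct.map_tmul, map_mul]
      change ΔF (zeta hq hc h2 n _) = zeta hq hc h2 n _ ⊗ₜ zeta hq hc h2 n 1 +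
        (zeta hq hc h2 n _ * zeta hq hc h2 n _) ⊗ₜ zeta hq hc h2 n _
      have hgi' := hgi (idxhi j)
      change ΔF (ti K q n (j + 1)) = ti K q n (j + 1) ⊗ₜ[K] ti K q n (j + 1) at hgi'
      rw [zeta_E, zeta_G, zeta_Gi, map_one, map_smul, map_mul, hx, hgi', add_mul,
        Algebra.TensorProduct.tmul_mul_tmul, Algebra.TensorProduct.tmul_mul_tmul, t_ti, smul_add,
        ← TensorProduct.smul_tmul', ← TensorProduct.tmul_smul, add_comm]
      rfl
  exact AlgHom.congr_fun this x

theorem zeta_counit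
    (εU : UbP K q n →ₐ[K] K) (hεU1 : ∀ i, εU (sG K q n i) = 1)
    (hεU2 : ∀ i, εU (sGi K q n i) = 1) (hεU3 : ∀ j, εU (sE K q n j) = 0)
    (εF : FqBp K q n →ₐ[K] K) (hεF1 : ∀ i j, εF (bT K q n i j) = if i = j then 1 else 0) (x) :
    εF (zeta hq hc h2 n x) = εU x := by
  have hg : ∀ i : Fin n, εF (t K q n i i) = 1 := fun i => by rw [t_val, hεF1, if_pos rfl]
  have : (εF.comp (zeta hq hc h2 n).toAlgHom) = εU := by
    refine borel_hom_ext (fun i => ?_) (fun i => ?_) (fun j => ?_)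
    · rw [hεU1]
      change εF (zeta hq hc h2 n _) = 1
      rw [zeta_G, hg]
    · rw [hεU2]
      change εF (zeta hq hc h2 n _) = 1
      rw [zeta_Gi]
      have := congrArg εF (ti_t (K := K) (q := q) (n := n) i)
      rwa [map_mul, hg, mul_one, map_one] at this
    · rw [hεU3]
      change εF (zeta hq hc h2 n _) = 0
      have hne : (idxlo j : Fin n) ≠ idxhi j := by simp [Fin.ext_iff, idxlo, idxhi]
      have h := hεF1 (idxlo j) (idxhi j)
      rw [if_neg hne, ← t_val] at h
      change εF (t K q n j (j + 1)) = 0 at h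
      rw [zeta_E, map_smul, map_mul, h, zero_mul, smul_zero]
  exact AlgHom.congr_fun this x

end Hopf

section RatFuncVar

variable (k : Type) [Field k]

theorem ratFunc_one_add_sq : (1 : RatFunc k) + RatFunc.X ^ 2 ≠ 0 := by
  intro h
  have h' : algebraMap (Polynomial k) (RatFunc k) (1 + Polynomial.X ^ 2) = 0 := by
    rw [map_add, map_one, map_pow, RatFunc.algebraMap_X, h]
  have h3 := (map_eq_zero_iff _ (RatFunc.algebraMap_injective k)).1 h'
  have := congrArg (fun p => Polynomial.coeff p 2) h3
  simp [Polynomial.coeff_one] at this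

theorem ratFunc_sub_inv : (RatFunc.X : RatFunc k) - (RatFunc.X)⁻¹ ≠ 0 := by
  intro h
  have h0 : (RatFunc.X : RatFunc k) ≠ 0 := RatFunc.X_ne_zero
  have h1 : (RatFunc.X : RatFunc k) ^ 2 - 1 = 0 := by
    have := congrArg (RatFunc.X * ·) h
    simpa [mul_sub, h0, pow_two] using this
  have h' : algebraMap (Polynomial k) (RatFunc k) (Polynomial.X ^ 2 - 1) = 0 := by
    rw [map_sub, map_one, map_pow, RatFunc.algebraMap_X, h1]
  have h3 := (map_eq_zero_iff _ (RatFunc.algebraMap_injective k)).1 h'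
  have := congrArg (fun p => Polynomial.coeff p 2) h3
  simp [Polynomial.coeff_one] at this

end RatFuncVar

/-- the assignment `G_i^{±1} ↦ t_{ii}^{±1}`,
`E_j ↦ −(q−q⁻¹)⁻¹ t_{j,j+1} t_{j+1,j+1}⁻¹` extends to an isomorphism of Hopf
`k(q)`-algebras `ζ_+ : U_q^P(b_+) → F_q^P[B_+]`: an algebra isomorphism with the
stated values on generators, compatible with the comultiplications and counits
(determined on generators as hypothesized). -/
theorem borel_plus_iso (k : Type) [Field k] [CharZero k] (n : ℕ)
    (ΔU : (UbP (RatFunc k) RatFunc.X n) →ₐ[RatFunc k]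
      ((UbP (RatFunc k) RatFunc.X n) ⊗[RatFunc k] (UbP (RatFunc k) RatFunc.X n)))
    (hΔU1 : ∀ i, ΔU (sG (RatFunc k) RatFunc.X n i) =
      sG (RatFunc k) RatFunc.X n i ⊗ₜ[RatFunc k] sG (RatFunc k) RatFunc.X n i)
    (hΔU2 : ∀ i, ΔU (sGi (RatFunc k) RatFunc.X n i) =
      sGi (RatFunc k) RatFunc.X n i ⊗ₜ[RatFunc k] sGi (RatFunc k) RatFunc.X n i)
    (hΔU3 : ∀ j, ΔU (sE (RatFunc k) RatFunc.X n j) =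
      sE (RatFunc k) RatFunc.X n j ⊗ₜ[RatFunc k] 1 +
        (sG (RatFunc k) RatFunc.X n (idxlo j) * sGi (RatFunc k) RatFunc.X n (idxhi j))
          ⊗ₜ[RatFunc k] sE (RatFunc k) RatFunc.X n j)
    (εU : (UbP (RatFunc k) RatFunc.X n) →ₐ[RatFunc k] RatFunc k)
    (hεU1 : ∀ i, εU (sG (RatFunc k) RatFunc.X n i) = 1)
    (hεU2 : ∀ i, εU (sGi (RatFunc k) RatFunc.X n i) = 1)
    (hεU3 : ∀ j, εU (sE (RatFunc k) RatFunc.X n j) = 0)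
    (ΔF : (FqBp (RatFunc k) RatFunc.X n) →ₐ[RatFunc k]
      ((FqBp (RatFunc k) RatFunc.X n) ⊗[RatFunc k] (FqBp (RatFunc k) RatFunc.X n)))
    (hΔF1 : ∀ i j, ΔF (bT (RatFunc k) RatFunc.X n i j) =
      ∑ l : Fin n, bT (RatFunc k) RatFunc.X n i l ⊗ₜ[RatFunc k] bT (RatFunc k) RatFunc.X n l j)
    (hΔF2 : ΔF (bDinv (RatFunc k) RatFunc.X n) =
      bDinv (RatFunc k) RatFunc.X n ⊗ₜ[RatFunc k] bDinv (RatFunc k) RatFunc.X n)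
    (εF : (FqBp (RatFunc k) RatFunc.X n) →ₐ[RatFunc k] RatFunc k)
    (hεF1 : ∀ i j, εF (bT (RatFunc k) RatFunc.X n i j) = if i = j then 1 else 0)
    (hεF2 : εF (bDinv (RatFunc k) RatFunc.X n) = 1) :
    ∃ ζ : (UbP (RatFunc k) RatFunc.X n) ≃ₐ[RatFunc k] FqBp (RatFunc k) RatFunc.X n,
      (∀ i, ζ (sG (RatFunc k) RatFunc.X n i) = bT (RatFunc k) RatFunc.X n i i) ∧
      (∀ i, ζ (sGi (RatFunc k) RatFunc.X n i) * bT (RatFunc k) RatFunc.X n i i = 1 ∧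
        bT (RatFunc k) RatFunc.X n i i * ζ (sGi (RatFunc k) RatFunc.X n i) = 1) ∧
      (∀ j, ζ (sE (RatFunc k) RatFunc.X n j) =
        (-(RatFunc.X - (RatFunc.X)⁻¹ : RatFunc k)⁻¹) •
          (bT (RatFunc k) RatFunc.X n (idxlo j) (idxhi j) *
            ζ (sGi (RatFunc k) RatFunc.X n (idxhi j)))) ∧
      (∀ x, ΔF (ζ x) = (Algebra.TensorProduct.map ζ.toAlgHom ζ.toAlgHom) (ΔU x)) ∧
      (∀ x, εF (ζ x) = εU x) := by
  -- The construction works over any field with `q ≠ 0`, `q - q⁻¹ ≠ 0` and `1 + q ^ 2 ≠ 0`.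
  have hq : (RatFunc.X : RatFunc k) ≠ 0 := RatFunc.X_ne_zero
  have hc := ratFunc_sub_inv k
  have h2 := ratFunc_one_add_sq k
  refine ⟨FqBp.zeta hq hc h2 n, fun i => ?_, fun i => ⟨?_, ?_⟩, fun j => ?_, fun x => ?_,
    fun x => ?_⟩
  · rw [FqBp.zeta_G, FqBp.t_val]
  · rw [FqBp.zeta_Gi, ← FqBp.t_val, FqBp.ti_t]
  · rw [FqBp.zeta_Gi, ← FqBp.t_val, FqBp.t_ti]
  · rw [FqBp.zeta_E, FqBp.zeta_Gi, ← FqBp.t_val]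
    rfl
  · exact zeta_comul hq hc h2 ΔU hΔU1 hΔU2 hΔU3 ΔF hΔF1 x
  · exact zeta_counit hq hc h2 εU hεU1 hεU2 hεU3 εF hεF1 x

end
end
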